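/- Let α ∈ (1,2), let u > 0 and c > 0 be real numbers, and set a = c·cos(π(α−2)/2). Then (c/π) · ∫₀^∞ s^{−1/α} · [ ∫₀^∞ exp(−t^α) · cos( t·s^{−1/α}·(u + c·s) − t^α·tan(πα/2) ) dt ] ds = Σ_{n=0}^∞ (−a)^n · u^{(α−1)·n} / Γ(1 + (α−1)·n), where Γ is the Gamma function and the series on the right-hand side is the Mittag-Leffler function evaluated appropriately. -/

import Mathlib

open MeasureTheory Real

/-!
The stable density is the real part of `∫ exp (i y t - κ t ^ α) dt` with `κ = 1 + i tan (πα / 2)`.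
Rotating the contour so that `κ` becomes a positive real number turns this into an integral along
the ray through `w = exp (iπ / α)`, on which `z ^ α` is negative. The time integral can then be done
first, and leaves the imaginary part of
`∫ exp (u z) z ^ (ρ - 1) / (a + z ^ ρ) dz`, `ρ = α - 1`, along that ray.
Together with its complex conjugate the ray is a contour winding around the negative axis. Pushed to
the right until `a < |z| ^ ρ` everywhere on it, it lets the quotient be expanded in a geometric
series, whose terms are Hankel's integrals for `u ^ (ρ n) / Γ (1 + ρ n)`.
-/

section

open Complex Filter Set Topology

/-! ### Contours in the slit plane -/

lemma integral_Ioi_of_hasDerivAt_of_tendsto_nhdsGT {E : Type*} [NormedAddCommGroup E]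
    [NormedSpace ℝ E] [CompleteSpace E] {f f' : ℝ → E} {a : ℝ} {l m : E}
    (hderiv : ∀ x ∈ Ioi a, HasDerivAt f (f' x) x) (f'int : IntegrableOn f' (Ioi a))
    (hl : Tendsto f (𝓝[>] a) (𝓝 l)) (hm : Tendsto f atTop (𝓝 m)) :
    ∫ x in Ioi a, f' x = m - l := by
  have hne : ∀ x ∈ Ioi a, Function.update f a l =ᶠ[𝓝 x] f := fun x hx ↦ by
    filter_upwards [Ioi_mem_nhds hx] with y hy
    exact Function.update_of_ne (ne_of_gt hy) l f
  have hcont : ContinuousWithinAt (Function.update f a l) (Ici a) a := by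
    rwa [continuousWithinAt_update_same, Ici_sdiff_left]
  have htop : Function.update f a l =ᶠ[atTop] f := by
    filter_upwards [Ioi_mem_atTop a] with y hy
    exact Function.update_of_ne (ne_of_gt hy) l f
  rw [integral_Ioi_of_hasDerivAt_of_tendsto hcont
    (fun x hx ↦ (hderiv x hx).congr_of_eventuallyEq (hne x hx)) f'int
    (hm.congr' htop.symm), Function.update_self]

/-- The open half-plane whose inner normal bisects the rays through `1` and `w`, for `w` in the
slit plane. It is a convex subset of the slit plane containing both rays, so that holomorphic
functions on the slit plane have primitives on it. -/
def bisectedHalfPlane (w : ℂ) : Set ℂ := {z | 0 < (‖w‖ + w.re) * z.re + w.im * z.im}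

lemma norm_add_re_pos {w : ℂ} (hw : w ∈ slitPlane) : 0 < ‖w‖ + w.re := by
  rcases hw with h | h
  · exact add_pos_of_nonneg_of_pos (norm_nonneg w) h
  · linarith [neg_abs_le w.re, abs_re_lt_norm.mpr h]

lemma convex_bisectedHalfPlane (w : ℂ) : Convex ℝ (bisectedHalfPlane w) := by
  refine convex_halfSpace_gt (f := fun z : ℂ ↦ (‖w‖ + w.re) * z.re + w.im * z.im) ⟨?_, ?_⟩ 0
  · intro x y; simp only [add_re, add_im]; ring
  · intro c x; simp only [real_smul, re_ofReal_mul, im_ofReal_mul, smul_eq_mul]; ring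

lemma isOpen_bisectedHalfPlane (w : ℂ) : IsOpen (bisectedHalfPlane w) :=
  isOpen_lt continuous_const (by fun_prop)

lemma bisectedHalfPlane_subset_slitPlane {w : ℂ} (hw : w ∈ slitPlane) :
    bisectedHalfPlane w ⊆ slitPlane := by
  intro z hz
  by_contra hcon
  obtain ⟨hre, him⟩ : z.re ≤ 0 ∧ z.im = 0 := by simpa [mem_slitPlane_iff] using hcon
  have hz' : 0 < (‖w‖ + w.re) * z.re + w.im * z.im := hz
  rw [him, mul_zero, add_zero] at hz'
  exact hz'.not_ge (mul_nonpos_of_nonneg_of_nonpos (norm_add_re_pos hw).le hre)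

lemma add_mul_mem_bisectedHalfPlane {w : ℂ} (hw : w ∈ slitPlane) {x y : ℝ} (hx : 0 ≤ x)
    (hy : 0 ≤ y) (hxy : 0 < x + y) : (x + y * w : ℂ) ∈ bisectedHalfPlane w := by
  have hpos := norm_add_re_pos hw
  have hsq : w.im ^ 2 = ‖w‖ ^ 2 - w.re ^ 2 := by rw [Complex.sq_norm, normSq_apply]; ring
  have hw0 : 0 < ‖w‖ := norm_pos_iff.mpr (slitPlane_ne_zero hw)
  have key : (‖w‖ + w.re) * (x + y * w : ℂ).re + w.im * (x + y * w : ℂ).im =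
      (‖w‖ + w.re) * (x + y * ‖w‖) := by
    simp only [add_re, add_im, re_ofReal_mul, im_ofReal_mul, ofReal_re, ofReal_im]
    linear_combination y * hsq
  rw [bisectedHalfPlane, mem_ofPred_eq, key]
  rcases hx.eq_or_lt with rfl | hx
  · exact mul_pos hpos (by nlinarith)
  · positivity

lemma add_mul_mem_slitPlane {w : ℂ} (hw : w ∈ slitPlane) {x y : ℝ} (hx : 0 ≤ x)
    (hy : 0 ≤ y) (hxy : 0 < x + y) : (x + y * w : ℂ) ∈ slitPlane :=
  bisectedHalfPlane_subset_slitPlane hw (add_mul_mem_bisectedHalfPlane hw hx hy hxy)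

lemma exists_primitive_bisectedHalfPlane {F : ℂ → ℂ} {w : ℂ} (hw : w ∈ slitPlane)
    (hF : DifferentiableOn ℂ F slitPlane) :
    ∃ Q : ℂ → ℂ, ∀ z ∈ bisectedHalfPlane w, HasDerivAt Q (F z) z := by
  obtain ⟨Q, hQ⟩ := (convex_bisectedHalfPlane w).exists_forall_hasDerivWithinAt
    (hF.mono (bisectedHalfPlane_subset_slitPlane hw))
  exact ⟨Q, fun z hz ↦ (hQ z hz).hasDerivAt ((isOpen_bisectedHalfPlane w).mem_nhds hz)⟩

lemma tendsto_primitive_mul_sub_primitive {F Q : ℂ → ℂ} {w : ℂ} (hw : w ∈ slitPlane)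
    (hQ : ∀ z ∈ bisectedHalfPlane w, HasDerivAt Q (F z) z) {l : Filter ℝ} {B : ℝ → ℝ}
    (hB : ∀ᶠ t in l, 0 < t ∧ ∀ x y : ℝ, 0 ≤ x → 0 ≤ y → x + y = t → ‖F (x + y * w)‖ ≤ B t)
    (hl : Tendsto (fun t ↦ B t * t) l (𝓝 0)) :
    Tendsto (fun t : ℝ ↦ Q (t * w) - Q t) l (𝓝 0) := by
  refine squeeze_zero_norm' ?_ (by simpa using hl.mul_const ‖w - 1‖)
  filter_upwards [hB] with t ⟨ht, hBt⟩
  have hseg : ∀ z ∈ segment ℝ (t : ℂ) (t * w), ∃ x y : ℝ, 0 ≤ x ∧ 0 ≤ y ∧ x + y = t ∧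
      z = x + y * w := by
    rintro z ⟨p, q, hp, hq, hpq, rfl⟩
    refine ⟨p * t, q * t, by positivity, by positivity, by rw [← add_mul, hpq, one_mul], ?_⟩
    simp only [real_smul, ofReal_mul]; ring
  have hmv := (convex_segment (𝕜 := ℝ) (t : ℂ) (t * w)).norm_image_sub_le_of_norm_hasDerivWithin_le
    (f := Q) (f' := F) (C := B t)
    (fun z hz ↦ by
      obtain ⟨x, y, hx, hy, hxy, rfl⟩ := hseg z hz
      exact (hQ _ (add_mul_mem_bisectedHalfPlane hw hx hy (hxy ▸ ht))).hasDerivWithinAt)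
    (fun z hz ↦ by
      obtain ⟨x, y, hx, hy, hxy, rfl⟩ := hseg z hz
      exact hBt x y hx hy hxy)
    (left_mem_segment ℝ _ _) (right_mem_segment ℝ _ _)
  refine hmv.trans_eq ?_
  rw [← mul_sub_one, norm_mul, norm_real, norm_of_nonneg ht.le]; ring

lemma hasDerivAt_comp_ray {F Q : ℂ → ℂ} {p w : ℂ} {t : ℝ}
    (hQ : HasDerivAt Q (F (p + t * w)) (p + t * w)) :
    HasDerivAt (fun t : ℝ ↦ Q (p + t * w)) (w * F (p + t * w)) t := by
  have hray : HasDerivAt (fun t : ℝ ↦ (p + t * w : ℂ)) w t := by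
    simpa using ((hasDerivAt_id t).ofReal_comp.mul_const w).const_add p
  exact (hQ.comp t hray).congr_deriv (mul_comm _ _)

lemma exists_mul_add_le_norm_add_mul {w : ℂ} (hw : w ∈ slitPlane) :
    ∃ m > 0, ∀ x y : ℝ, 0 ≤ x → 0 ≤ y → m * (x + y) ≤ ‖(x + y * w : ℂ)‖ := by
  have hcont : Continuous fun t : ℝ ↦ ‖((1 - t : ℝ) + t * w : ℂ)‖ := by fun_prop
  obtain ⟨t₀, ht₀, hmin⟩ := isCompact_Icc.exists_isMinOn (nonempty_Icc.mpr zero_le_one)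
    (hcont.continuousOn (s := Icc (0 : ℝ) 1))
  have hm : 0 < ‖((1 - t₀ : ℝ) + t₀ * w : ℂ)‖ := norm_pos_iff.mpr <| slitPlane_ne_zero <|
    add_mul_mem_slitPlane hw (sub_nonneg.mpr ht₀.2) ht₀.1 (by simp)
  refine ⟨_, hm, fun x y hx hy ↦ ?_⟩
  rcases (add_nonneg hx hy).eq_or_lt with h | h
  · simp [← h]
  have hle := hmin (show y / (x + y) ∈ Icc (0 : ℝ) 1 from
    ⟨by positivity, (div_le_one h).mpr (by linarith)⟩)
  have hz : (x + y * w : ℂ) = (x + y : ℝ) * ((1 - y / (x + y) : ℝ) + (y / (x + y) : ℝ) * w) := by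
    have : (x + y : ℂ) ≠ 0 := mod_cast h.ne'
    push_cast; field_simp; ring
  rw [hz, norm_mul, norm_real, norm_of_nonneg h.le, mul_comm]
  exact mul_le_mul_of_nonneg_left hle h.le

lemma continuousOn_comp_ray {F : ℂ → ℂ} {w : ℂ} (hw : w ∈ slitPlane)
    (hF : ContinuousOn F slitPlane) {x : ℝ} (hx : 0 ≤ x) :
    ContinuousOn (fun t : ℝ ↦ F (x + t * w)) (Ioi 0) :=
  hF.comp (by fun_prop) fun _ ht ↦
    add_mul_mem_slitPlane hw hx (le_of_lt ht) (add_pos_of_nonneg_of_pos hx ht)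

lemma integrableOn_rpow_mul_exp_neg_mul {p δ : ℝ} (hp : -1 < p) (hδ : 0 < δ) :
    IntegrableOn (fun t : ℝ ↦ t ^ p * Real.exp (-δ * t)) (Ioi 0) := by
  simpa only [Real.rpow_one] using integrableOn_rpow_mul_exp_neg_mul_rpow hp one_pos hδ

lemma integrableOn_ray_of_norm_le {F : ℂ → ℂ} {w : ℂ} (hw : w ∈ slitPlane)
    (hF : ContinuousOn F slitPlane) {x p C δ : ℝ} (hx : 0 ≤ x) (hp : -1 < p) (hδ : 0 < δ)
    (hbound : ∀ t : ℝ, 0 < t → ‖F (x + t * w)‖ ≤ C * (t ^ p * Real.exp (-δ * t))) :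
    IntegrableOn (fun t : ℝ ↦ F (x + t * w)) (Ioi 0) :=
  ((integrableOn_rpow_mul_exp_neg_mul hp hδ).const_mul C).mono'
    ((continuousOn_comp_ray hw hF hx).aestronglyMeasurable measurableSet_Ioi)
    ((ae_restrict_iff' measurableSet_Ioi).mpr (ae_of_all _ hbound))

lemma tendsto_rpow_mul_exp_neg_mul_mul_nhdsGT_zero {p : ℝ} (hp : -1 < p) (δ : ℝ) :
    Tendsto (fun t : ℝ ↦ t ^ p * Real.exp (-δ * t) * t) (𝓝[>] 0) (𝓝 0) := by
  have hcont : Tendsto (fun t : ℝ ↦ t ^ (p + 1) * Real.exp (-δ * t)) (𝓝[>] 0) (𝓝 0) := by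
    have hp' : 0 < p + 1 := by linarith
    have : ContinuousAt (fun t : ℝ ↦ t ^ (p + 1) * Real.exp (-δ * t)) 0 :=
      (Real.continuousAt_rpow_const 0 _ (Or.inr hp'.le)).mul (by fun_prop)
    simpa [ContinuousAt, Real.zero_rpow hp'.ne'] using this.mono_left nhdsWithin_le_nhds
  refine hcont.congr' ?_
  filter_upwards [self_mem_nhdsWithin] with t ht
  rw [Real.rpow_add_one (ne_of_gt ht)]; ring

/-- Rotation of the contour: Cauchy's theorem for the sector between the rays through `1` and
`w`. -/
lemma mul_integral_ray_eq_integral {F : ℂ → ℂ} {w : ℂ} (hw : w ∈ slitPlane)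
    (hF : DifferentiableOn ℂ F slitPlane) {p C δ : ℝ} (hp : -1 < p) (hδ : 0 < δ)
    (hbound : ∀ x y : ℝ, 0 ≤ x → 0 ≤ y → 0 < x + y →
      ‖F (x + y * w)‖ ≤ C * ((x + y) ^ p * Real.exp (-δ * (x + y)))) :
    w * ∫ t in Ioi (0 : ℝ), F (t * w) = ∫ t in Ioi (0 : ℝ), F t := by
  obtain ⟨Q, hQ⟩ := exists_primitive_bisectedHalfPlane hw hF
  have hint_w : IntegrableOn (fun t : ℝ ↦ F (t * w)) (Ioi 0) := by
    simpa using integrableOn_ray_of_norm_le (C := C) hw hF.continuousOn le_rfl hp hδ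
      fun t ht ↦ by simpa using hbound 0 t le_rfl ht.le (by simpa using ht)
  have hint_one : IntegrableOn (fun t : ℝ ↦ F t) (Ioi 0) := by
    simpa using integrableOn_ray_of_norm_le (C := C) one_mem_slitPlane hF.continuousOn le_rfl hp hδ
      fun t ht ↦ by simpa using hbound t 0 ht.le le_rfl (by simpa using ht)
  have hderiv : ∀ t ∈ Ioi (0 : ℝ),
      HasDerivAt (fun t : ℝ ↦ Q (t * w) - Q t) (w * F (t * w) - F t) t := fun t ht ↦ by
    have hmem_w := add_mul_mem_bisectedHalfPlane hw le_rfl (le_of_lt ht) (by simpa using ht)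
    have hmem_one := add_mul_mem_bisectedHalfPlane hw (le_of_lt ht) le_rfl (by simpa using ht)
    simp only [ofReal_zero, zero_add, zero_mul, add_zero] at hmem_w hmem_one
    have hray := hasDerivAt_comp_ray (p := 0) (by simpa only [zero_add] using hQ _ hmem_w)
    simp only [zero_add] at hray
    exact hray.sub (hQ _ hmem_one).comp_ofReal
  have htendsto {l : Filter ℝ} (hpos : ∀ᶠ t in l, 0 < t)
      (hl : Tendsto (fun t : ℝ ↦ t ^ p * Real.exp (-δ * t) * t) l (𝓝 0)) :
      Tendsto (fun t : ℝ ↦ Q (t * w) - Q t) l (𝓝 0) := by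
    refine tendsto_primitive_mul_sub_primitive hw hQ
      (B := fun t ↦ C * (t ^ p * Real.exp (-δ * t))) ?_ (by simpa [mul_assoc] using hl.const_mul C)
    filter_upwards [hpos] with t ht
    exact ⟨ht, fun x y hx hy hxy ↦ by simpa only [hxy] using hbound x y hx hy (hxy ▸ ht)⟩
  have hzero := integral_Ioi_of_hasDerivAt_of_tendsto_nhdsGT hderiv
    ((hint_w.const_mul w).sub hint_one)
    (htendsto self_mem_nhdsWithin (tendsto_rpow_mul_exp_neg_mul_mul_nhdsGT_zero hp δ))
    (htendsto (eventually_gt_atTop 0) ?_)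
  · rwa [sub_zero, integral_sub (hint_w.const_mul w) hint_one, integral_const_mul,
      sub_eq_zero] at hzero
  · refine (tendsto_rpow_mul_exp_neg_mul_atTop_nhds_zero (p + 1) δ hδ).congr' ?_
    filter_upwards [eventually_gt_atTop 0] with t ht
    rw [Real.rpow_add_one ht.ne']; ring

/-! ### Integrals of exponentials of powers along a ray -/

lemma exists_mul_rpow_le_mul_add {r δ : ℝ} (hr0 : 0 ≤ r) (hr1 : r < 1) (hδ : 0 < δ) (D : ℝ) :
    ∃ K, ∀ t : ℝ, 0 < t → D * t ^ r ≤ δ * t + K := by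
  have hlim : Tendsto (fun t : ℝ ↦ |D| * t ^ (r - 1)) atTop (𝓝 0) := by
    simpa using (tendsto_rpow_neg_atTop (sub_pos.mpr hr1)).const_mul |D|
  obtain ⟨T, hTpos, hT⟩ := ((eventually_gt_atTop 0).and
    (eventually_forall_ge_atTop.mpr (hlim.eventually_le_const hδ))).exists
  refine ⟨|D| * T ^ r, fun t ht ↦ (mul_le_mul_of_nonneg_right (le_abs_self D)
    (by positivity)).trans ?_⟩
  rcases le_total t T with h | h
  · have : |D| * t ^ r ≤ |D| * T ^ r := by gcongr
    nlinarith
  · have hpow : t ^ r = t ^ (r - 1) * t := by rw [← Real.rpow_add_one ht.ne', sub_add_cancel]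
    rw [hpow, ← mul_assoc]
    exact (mul_le_mul_of_nonneg_right (hT t h) ht.le).trans
      (le_add_of_nonneg_right (by positivity))

lemma rpow_le_add_mul_rpow {m M t s : ℝ} (hm : 0 < m) (ht : 0 < t) (hms : m * t ≤ s)
    (hsM : s ≤ M * t) (p : ℝ) : s ^ p ≤ (m ^ p + M ^ p) * t ^ p := by
  have hM : 0 < M := pos_of_mul_pos_left ((mul_pos hm ht).trans_le (hms.trans hsM)) ht.le
  rw [add_mul, ← Real.mul_rpow hm.le ht.le, ← Real.mul_rpow hM.le ht.le]
  rcases le_total 0 p with hp | hp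
  · exact (Real.rpow_le_rpow ((mul_pos hm ht).le.trans hms) hsM hp).trans
      (le_add_of_nonneg_left (by positivity))
  · exact (Real.rpow_le_rpow_of_nonpos (mul_pos hm ht) hms hp).trans
      (le_add_of_nonneg_right (by positivity))

lemma exists_norm_cpow_mul_exp_le {w : ℂ} (hw : 0 < w.re) {r : ℝ} (hr0 : 0 ≤ r) (hr1 : r < 1)
    (p : ℝ) (x : ℂ) : ∃ C δ : ℝ, 0 < δ ∧ ∀ a b : ℝ, 0 ≤ a → 0 ≤ b → 0 < a + b →
      ‖(a + b * w : ℂ) ^ (p : ℂ) * cexp (x * (a + b * w) ^ (r : ℂ) - (a + b * w))‖ ≤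
        C * ((a + b) ^ p * Real.exp (-δ * (a + b))) := by
  obtain ⟨m, hm, hlow⟩ := exists_mul_add_le_norm_add_mul (Or.inl hw : w ∈ slitPlane)
  set δ := min 1 w.re
  have hδ : 0 < δ := lt_min one_pos hw
  set M := 1 + ‖w‖
  obtain ⟨K, hK⟩ := exists_mul_rpow_le_mul_add hr0 hr1 (half_pos hδ) (‖x‖ * M ^ r)
  refine ⟨(m ^ p + M ^ p) * Real.exp K, δ / 2, half_pos hδ, fun a b ha hb hab ↦ ?_⟩
  set z : ℂ := a + b * w with hz
  have hnorm_le : ‖z‖ ≤ M * (a + b) := by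
    refine (norm_add_le _ _).trans ?_
    rw [norm_mul, norm_real, norm_real, norm_of_nonneg ha, norm_of_nonneg hb]
    nlinarith [mul_nonneg ha (norm_nonneg w)]
  have hre : δ * (a + b) ≤ z.re := by
    simp only [hz, add_re, ofReal_re, re_ofReal_mul]
    nlinarith [min_le_left 1 w.re, min_le_right 1 w.re]
  have hpow_re : (x * z ^ (r : ℂ)).re ≤ δ / 2 * (a + b) + K := calc
    (x * z ^ (r : ℂ)).re ≤ ‖x‖ * ‖z‖ ^ r := by
      rw [← norm_cpow_real, ← norm_mul]; exact re_le_norm _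
    _ ≤ ‖x‖ * (M * (a + b)) ^ r := by gcongr
    _ = ‖x‖ * M ^ r * (a + b) ^ r := by rw [Real.mul_rpow (by positivity) hab.le]; ring
    _ ≤ δ / 2 * (a + b) + K := hK _ hab
  calc ‖z ^ (p : ℂ) * cexp (x * z ^ (r : ℂ) - z)‖
      = ‖z‖ ^ p * Real.exp ((x * z ^ (r : ℂ)).re - z.re) := by
        rw [norm_mul, norm_cpow_real, norm_exp, sub_re]
    _ ≤ ((m ^ p + M ^ p) * (a + b) ^ p) * Real.exp (K + -(δ / 2) * (a + b)) := by
        gcongr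
        · exact rpow_le_add_mul_rpow hm hab (hlow a b ha hb) hnorm_le p
        · linarith
    _ = _ := by rw [Real.exp_add]; ring

lemma mul_integral_cpow_mul_exp_ray {w : ℂ} (hw : 0 < w.re) {p r : ℝ} (hp : -1 < p)
    (hr0 : 0 ≤ r) (hr1 : r < 1) (x : ℂ) :
    w * ∫ t in Ioi (0 : ℝ), (t * w : ℂ) ^ (p : ℂ) * cexp (x * (t * w) ^ (r : ℂ) - t * w) =
      ∫ t in Ioi (0 : ℝ), (t : ℂ) ^ (p : ℂ) * cexp (x * t ^ (r : ℂ) - t) := by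
  obtain ⟨C, δ, hδ, hbound⟩ := exists_norm_cpow_mul_exp_le hw hr0 hr1 p x
  refine mul_integral_ray_eq_integral
    (F := fun z ↦ z ^ (p : ℂ) * cexp (x * z ^ (r : ℂ) - z)) (Or.inl hw) (fun z hz ↦ ?_) hp hδ hbound
  exact ((differentiableAt_id.cpow_const hz).mul (((differentiableAt_id.cpow_const hz).const_mul
    x).sub differentiableAt_id).cexp).differentiableWithinAt

lemma ofReal_mul_cpow {t : ℝ} (ht : 0 < t) {w : ℂ} (hw : w ≠ 0) (s : ℂ) :
    (t * w : ℂ) ^ s = t ^ s * w ^ s := by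
  have ht' : (t : ℂ) ≠ 0 := ofReal_ne_zero.mpr ht.ne'
  rw [cpow_def_of_ne_zero (mul_ne_zero ht' hw), cpow_def_of_ne_zero ht', cpow_def_of_ne_zero hw,
    log_ofReal_mul ht hw, ofReal_log ht.le, add_mul, Complex.exp_add]

lemma cpow_mul_self {z : ℂ} (hz : z ≠ 0) (s : ℂ) : z ^ s * z = z ^ (s + 1) := by
  rw [cpow_add _ _ hz, cpow_one]

lemma integral_cpow_mul_exp_neg_mul {κ : ℂ} (hκ : 0 < κ.re) {p : ℝ} (hp : -1 < p) :
    ∫ t in Ioi (0 : ℝ), (t : ℂ) ^ (p : ℂ) * cexp (-(κ * t)) =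
      κ ^ (-(p + 1) : ℂ) * Real.Gamma (p + 1) := by
  have hκ0 : κ ≠ 0 := slitPlane_ne_zero (Or.inl hκ)
  have hGamma : ∫ t in Ioi (0 : ℝ), (t : ℂ) ^ (p : ℂ) * cexp (-t) = Real.Gamma (p + 1) := by
    have := Complex.integral_cpow_mul_exp_neg_mul_Ioi (a := p + 1) (by simpa using by linarith)
      one_pos
    simpa [← Complex.Gamma_ofReal] using this
  have hrot := mul_integral_cpow_mul_exp_ray hκ hp le_rfl one_pos 0
  simp only [zero_mul, zero_sub, hGamma] at hrot
  rw [← hrot, ← mul_assoc, ← integral_const_mul]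
  refine setIntegral_congr_fun measurableSet_Ioi fun t ht ↦ ?_
  have hcancel : κ ^ (-(p + 1) : ℂ) * κ * κ ^ (p : ℂ) = 1 := by
    rw [mul_assoc, mul_comm κ, cpow_mul_self hκ0, ← cpow_add _ _ hκ0, neg_add_cancel,
      cpow_zero]
  simp only [ofReal_mul_cpow ht hκ0, mul_comm κ]
  linear_combination (-(t : ℂ) ^ (p : ℂ) * cexp (-(t * κ))) * hcancel

lemma integral_exp_sub_mul_rpow {α : ℝ} (hα : 0 < α) (κ x : ℂ) :
    ∫ t in Ioi (0 : ℝ), cexp (x * t - κ * (t ^ α : ℝ)) =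
      (α⁻¹ : ℝ) * ∫ t in Ioi (0 : ℝ), (t : ℂ) ^ ((α⁻¹ - 1 : ℝ) : ℂ) *
        cexp (x * t ^ ((α⁻¹ : ℝ) : ℂ) - κ * t) := by
  rw [← integral_comp_rpow_Ioi_of_pos (inv_pos.mpr hα), ← integral_const_mul]
  refine setIntegral_congr_fun measurableSet_Ioi fun t ht ↦ ?_
  have ht' : 0 ≤ t := le_of_lt ht
  simp only [← Real.rpow_mul ht', inv_mul_cancel₀ hα.ne', Real.rpow_one, real_smul, ofReal_mul,
    ofReal_cpow ht', mul_assoc]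

lemma cpow_inv_mul_integral_exp_sub_mul_rpow {α : ℝ} (hα : 1 < α) {κ : ℂ} (hκ : 0 < κ.re)
    (x : ℂ) :
    κ ^ ((α⁻¹ : ℝ) : ℂ) * ∫ t in Ioi (0 : ℝ),
        cexp (x * κ ^ ((α⁻¹ : ℝ) : ℂ) * t - κ * (t ^ α : ℝ)) =
      ∫ t in Ioi (0 : ℝ), cexp (x * t - (t ^ α : ℝ)) := by
  have hα0 : 0 < α := one_pos.trans hα
  have hκ0 : κ ≠ 0 := slitPlane_ne_zero (Or.inl hκ)
  have hinv : 0 < α⁻¹ := inv_pos.mpr hα0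
  have hrot := mul_integral_cpow_mul_exp_ray hκ (p := α⁻¹ - 1) (by linarith) hinv.le
    (inv_lt_one_of_one_lt₀ hα) x
  have hsub := integral_exp_sub_mul_rpow hα0 1 x
  simp only [one_mul] at hsub
  rw [hsub, ← hrot, integral_exp_sub_mul_rpow hα0]
  simp only [← integral_const_mul]
  refine setIntegral_congr_fun measurableSet_Ioi fun t ht ↦ ?_
  have hκpow : κ * κ ^ ((α⁻¹ - 1 : ℝ) : ℂ) = κ ^ ((α⁻¹ : ℝ) : ℂ) := by
    rw [mul_comm, cpow_mul_self hκ0]; simp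
  simp only [ofReal_mul_cpow ht hκ0, ← hκpow]
  ring_nf

/-! ### Shifting a ray to the right -/

section Shift

variable {F Q : ℂ → ℂ} {w : ℂ} {C q u R : ℝ}

lemma exists_norm_le_of_norm_le_rpow_mul_exp (hw : w ∈ slitPlane) (hq : 0 ≤ q)
    (hbound : ∀ z ∈ slitPlane, ‖F z‖ ≤ C * (‖z‖ ^ (-q) * Real.exp (u * z.re))) :
    ∃ K, 0 ≤ K ∧ ∀ x y : ℝ, 0 ≤ x → 0 ≤ y → 0 < x + y →
      ‖F (x + y * w)‖ ≤ K * ((x + y) ^ (-q) * Real.exp (u * x + u * w.re * y)) := by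
  obtain ⟨m, hm, hlow⟩ := exists_mul_add_le_norm_add_mul hw
  have hC : 0 ≤ C := nonneg_of_mul_nonneg_left
    ((norm_nonneg _).trans (hbound 1 one_mem_slitPlane)) (by simp [Real.exp_pos])
  refine ⟨C * m ^ (-q), by positivity, fun x y hx hy hxy ↦ ?_⟩
  have hpow : ‖(x + y * w : ℂ)‖ ^ (-q) ≤ m ^ (-q) * (x + y) ^ (-q) := by
    rw [← Real.mul_rpow hm.le hxy.le]
    exact Real.rpow_le_rpow_of_nonpos (by positivity) (hlow x y hx hy) (neg_nonpos.mpr hq)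
  have hre : u * (x + y * w : ℂ).re = u * x + u * w.re * y := by
    rw [add_re, re_ofReal_mul, ofReal_re]; ring
  calc ‖F (x + y * w)‖
      ≤ C * (‖(x + y * w : ℂ)‖ ^ (-q) * Real.exp (u * (x + y * w : ℂ).re)) :=
        hbound _ (add_mul_mem_slitPlane hw hx hy hxy)
    _ ≤ C * ((m ^ (-q) * (x + y) ^ (-q)) * Real.exp (u * x + u * w.re * y)) := by
        rw [hre]; gcongr
    _ = _ := by ring

lemma exists_norm_shifted_ray_le (hw : w ∈ slitPlane) (hq : 0 ≤ q) (hu : 0 ≤ u)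
    (hbound : ∀ z ∈ slitPlane, ‖F z‖ ≤ C * (‖z‖ ^ (-q) * Real.exp (u * z.re))) (R : ℝ) :
    ∃ K, ∀ x ∈ Icc 0 R, ∀ t : ℝ, 0 < t →
      ‖F (x + t * w)‖ ≤ K * (t ^ (-q) * Real.exp (-(u * -w.re) * t)) := by
  obtain ⟨K, hK, hle⟩ := exists_norm_le_of_norm_le_rpow_mul_exp hw hq hbound
  refine ⟨K * Real.exp (u * R), fun x hx t ht ↦
    (hle x t hx.1 ht.le (add_pos_of_nonneg_of_pos hx.1 ht)).trans ?_⟩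
  have hpow : (x + t) ^ (-q) ≤ t ^ (-q) :=
    Real.rpow_le_rpow_of_nonpos ht (le_add_of_nonneg_left hx.1) (neg_nonpos.mpr hq)
  have hx' := hx.2
  calc K * ((x + t) ^ (-q) * Real.exp (u * x + u * w.re * t))
      ≤ K * (t ^ (-q) * Real.exp (u * R + u * w.re * t)) := by gcongr
    _ = _ := by rw [Real.exp_add]; ring_nf

lemma integrableOn_shifted_ray (hw : w ∈ slitPlane) (hre : w.re < 0)
    (hF : ContinuousOn F slitPlane) (hq0 : 0 ≤ q) (hq1 : q < 1) (hu : 0 < u)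
    (hbound : ∀ z ∈ slitPlane, ‖F z‖ ≤ C * (‖z‖ ^ (-q) * Real.exp (u * z.re))) (hR : 0 ≤ R) :
    IntegrableOn (fun t : ℝ ↦ F (R + t * w)) (Ioi 0) := by
  obtain ⟨K, hK⟩ := exists_norm_shifted_ray_le hw hq0 hu.le hbound R
  exact integrableOn_ray_of_norm_le hw hF hR (by linarith) (mul_pos hu (neg_pos.mpr hre))
    (hK R (right_mem_Icc.mpr hR))

lemma tendsto_primitive_shift_atTop (hw : w ∈ slitPlane) (hre : w.re < 0)
    (hQ : ∀ z ∈ bisectedHalfPlane w, HasDerivAt Q (F z) z) (hq : 0 ≤ q) (hu : 0 < u)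
    (hbound : ∀ z ∈ slitPlane, ‖F z‖ ≤ C * (‖z‖ ^ (-q) * Real.exp (u * z.re))) (hR : 0 ≤ R) :
    Tendsto (fun t : ℝ ↦ Q (R + t * w) - Q (t * w)) atTop (𝓝 0) := by
  obtain ⟨K, hK⟩ := exists_norm_shifted_ray_le hw hq hu.le hbound R
  have hdecay := tendsto_rpow_mul_exp_neg_mul_atTop_nhds_zero (-q) (u * -w.re)
    (mul_pos hu (neg_pos.mpr hre))
  refine squeeze_zero_norm' ?_ (by simpa using (hdecay.const_mul K).mul_const R)
  filter_upwards [eventually_gt_atTop 0] with t ht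
  have hderiv : ∀ x ∈ Icc 0 R,
      HasDerivWithinAt (fun x : ℝ ↦ Q (x + t * w)) (F (x + t * w)) (Icc 0 R) x := fun x hx ↦
    ((hQ _ (add_mul_mem_bisectedHalfPlane hw hx.1 ht.le
      (add_pos_of_nonneg_of_pos hx.1 ht))).comp_add_const (x : ℂ) (t * w)).comp_ofReal
      |>.hasDerivWithinAt
  have hmv := (convex_Icc 0 R).norm_image_sub_le_of_norm_hasDerivWithin_le hderiv
    (fun x hx ↦ hK x hx t ht) (left_mem_Icc.mpr hR) (right_mem_Icc.mpr hR)
  simpa [abs_of_nonneg hR] using hmv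

lemma im_primitive_eq_of_pos (hw : w ∈ slitPlane)
    (hQ : ∀ z ∈ bisectedHalfPlane w, HasDerivAt Q (F z) z)
    (hreal : ∀ x : ℝ, 0 < x → (F x).im = 0) {x y : ℝ} (hx : 0 < x) (hy : 0 < y) :
    (Q x).im = (Q y).im := by
  have hderiv : ∀ t ∈ Ioi (0 : ℝ), HasDerivWithinAt (fun t : ℝ ↦ (Q t).im) 0 (Ioi 0) t :=
    fun t ht ↦ by
    have hmem := add_mul_mem_bisectedHalfPlane hw (le_of_lt ht) le_rfl (by simpa using ht)
    simp only [ofReal_zero, zero_mul, add_zero] at hmem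
    have := imCLM.hasFDerivAt.comp_hasDerivAt t (hQ _ hmem).comp_ofReal
    rw [imCLM_apply, hreal t ht] at this
    exact this.hasDerivWithinAt
  have hconst := (convex_Ioi (0 : ℝ)).norm_image_sub_le_of_norm_hasDerivWithin_le (C := 0) hderiv
    (by simp) hy hx
  rwa [zero_mul, norm_le_zero_iff, sub_eq_zero] at hconst

lemma tendsto_im_primitive_shift_nhdsGT_zero (hw : w ∈ slitPlane)
    (hQ : ∀ z ∈ bisectedHalfPlane w, HasDerivAt Q (F z) z)
    (hreal : ∀ x : ℝ, 0 < x → (F x).im = 0) (hq0 : 0 ≤ q) (hq1 : q < 1) (hu : 0 ≤ u)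
    (hbound : ∀ z ∈ slitPlane, ‖F z‖ ≤ C * (‖z‖ ^ (-q) * Real.exp (u * z.re))) (hR : 0 < R)
    (hre : w.re ≤ 0) :
    Tendsto (fun t : ℝ ↦ (Q (R + t * w) - Q (t * w)).im) (𝓝[>] 0) (𝓝 0) := by
  have hcorner : Tendsto (fun t : ℝ ↦ Q (t * w) - Q t) (𝓝[>] 0) (𝓝 0) := by
    obtain ⟨K, hK, hle⟩ := exists_norm_le_of_norm_le_rpow_mul_exp hw hq0 hbound
    refine tendsto_primitive_mul_sub_primitive hw hQ
      (B := fun t ↦ K * (t ^ (-q) * Real.exp (-(-u) * t))) ?_ (by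
        simpa only [mul_assoc, mul_zero] using
          (tendsto_rpow_mul_exp_neg_mul_mul_nhdsGT_zero (by linarith : -1 < -q) (-u)).const_mul K)
    filter_upwards [self_mem_nhdsWithin] with t ht
    refine ⟨ht, fun x y hx hy hxy ↦ (hle x y hx hy (hxy ▸ ht)).trans ?_⟩
    have hexp : u * x + u * w.re * y ≤ -(-u) * t := by
      rw [← hxy]
      nlinarith [mul_nonneg hu hy, mul_nonneg (mul_nonneg hu hy) (neg_nonneg.mpr hre)]
    rw [hxy]
    gcongr
    exact Real.rpow_nonneg (le_of_lt ht) _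
  have hvertex : Tendsto (fun t : ℝ ↦ Q (R + t * w)) (𝓝[>] 0) (𝓝 (Q R)) := by
    have hmem := add_mul_mem_bisectedHalfPlane hw hR.le le_rfl (by simpa using hR)
    have hcont : ContinuousAt (fun t : ℝ ↦ Q (R + t * w)) 0 :=
      ContinuousAt.comp (hQ _ hmem).continuousAt (by fun_prop)
    simpa [ContinuousAt] using hcont.tendsto.mono_left nhdsWithin_le_nhds
  have hdiff := (continuous_im.tendsto _).comp
    ((hvertex.sub_const (Q R)).sub hcorner)
  simp only [sub_self, zero_im] at hdiff
  refine hdiff.congr' ?_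
  filter_upwards [self_mem_nhdsWithin] with t ht
  have hQR := im_primitive_eq_of_pos hw hQ hreal hR ht
  simp only [Function.comp_apply, sub_im, hQR]
  ring

lemma im_mul_integral_shifted_ray (hw : w ∈ slitPlane) (hre : w.re < 0)
    (hF : DifferentiableOn ℂ F slitPlane) (hreal : ∀ x : ℝ, 0 < x → (F x).im = 0)
    (hq0 : 0 ≤ q) (hq1 : q < 1) (hu : 0 < u)
    (hbound : ∀ z ∈ slitPlane, ‖F z‖ ≤ C * (‖z‖ ^ (-q) * Real.exp (u * z.re))) (hR : 0 < R) :
    (w * ∫ t in Ioi (0 : ℝ), F (R + t * w)).im = (w * ∫ t in Ioi (0 : ℝ), F (t * w)).im := by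
  obtain ⟨Q, hQ⟩ := exists_primitive_bisectedHalfPlane hw hF
  have hint {x : ℝ} (hx : 0 ≤ x) :=
    (integrableOn_shifted_ray hw hre hF.continuousOn hq0 hq1 hu hbound hx).const_mul w
  have hint_zero := hint le_rfl
  simp only [ofReal_zero, zero_add] at hint_zero
  have hderiv : ∀ t ∈ Ioi (0 : ℝ), HasDerivAt (fun t : ℝ ↦ (Q (R + t * w) - Q (t * w)).im)
      (w * F (R + t * w) - w * F (t * w)).im t := fun t ht ↦ by
    have hray {x : ℝ} (hx : 0 ≤ x) := hasDerivAt_comp_ray (hQ _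
      (add_mul_mem_bisectedHalfPlane hw hx (le_of_lt ht) (add_pos_of_nonneg_of_pos hx ht)))
    have hray_zero := hray le_rfl
    simp only [ofReal_zero, zero_add] at hray_zero
    exact imCLM.hasFDerivAt.comp_hasDerivAt t ((hray hR.le).sub hray_zero)
  have hFTC := integral_Ioi_of_hasDerivAt_of_tendsto_nhdsGT hderiv
    ((hint hR.le).sub hint_zero).im
    (tendsto_im_primitive_shift_nhdsGT_zero hw hQ hreal hq0 hq1 hu.le hbound hR hre.le)
    ((continuous_im.tendsto 0).comp
      (tendsto_primitive_shift_atTop hw hre hQ hq0 hu hbound hR.le))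
  have him := (imCLM.integral_comp_comm ((hint hR.le).sub hint_zero)).symm.trans hFTC
  simp only [Pi.sub_apply] at him
  rw [integral_sub (hint hR.le) hint_zero, integral_const_mul, integral_const_mul] at him
  simpa [sub_eq_zero] using him

end Shift

/-! ### Hankel's integral -/

lemma cpow_mul_neg_mul_cpow_neg {w : ℂ} (hw : 0 < w.im) {u : ℝ} (hu : 0 < u) (p : ℝ) :
    w ^ (p : ℂ) * (-(u * w)) ^ (-p : ℂ) = (u ^ (-p) : ℝ) * cexp ((π * p : ℝ) * I) := by
  have hw0 : w ≠ 0 := fun h ↦ by simp [h] at hw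
  have hlog : Complex.log (-w) = Complex.log w - π * I := by
    simp only [Complex.log, norm_neg, arg_neg_eq_arg_sub_pi_of_im_pos hw]
    push_cast; ring
  have hneg : (-w) ^ (-p : ℂ) = w ^ (-p : ℂ) * cexp ((π * p : ℝ) * I) := by
    rw [cpow_def_of_ne_zero (neg_ne_zero.mpr hw0), cpow_def_of_ne_zero hw0, hlog,
      ← Complex.exp_add]
    congr 1; push_cast; ring
  have hcancel : w ^ (p : ℂ) * w ^ (-p : ℂ) = 1 := by
    rw [← cpow_add _ _ hw0, add_neg_cancel, cpow_zero]
  rw [← mul_neg, ofReal_mul_cpow hu (neg_ne_zero.mpr hw0), hneg, ofReal_cpow hu.le, ofReal_neg]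
  linear_combination ((u : ℂ) ^ (-p : ℂ) * cexp ((π * p : ℝ) * I)) * hcancel

section Hankel

variable {w : ℂ} {u R : ℝ}

lemma differentiableOn_exp_mul_cpow (u s : ℂ) :
    DifferentiableOn ℂ (fun z ↦ cexp (u * z) * z ^ s) slitPlane := fun z hz ↦
  ((by fun_prop : DifferentiableAt ℂ (fun z ↦ cexp (u * z)) z).mul
    (differentiableAt_id.cpow_const hz)).differentiableWithinAt

lemma norm_exp_mul_add_mul (u R t : ℝ) (w : ℂ) :
    ‖cexp (u * (R + t * w))‖ = Real.exp (u * R) * Real.exp (-(u * -w.re) * t) := by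
  rw [norm_exp, re_ofReal_mul, add_re, ofReal_re, re_ofReal_mul, ← Real.exp_add]
  ring_nf

lemma norm_exp_mul_cpow_ray_le {t s : ℝ} (hs : 0 ≤ s) (ht : 1 ≤ ‖(R + t * w : ℂ)‖) :
    ‖cexp (u * (R + t * w)) * (R + t * w : ℂ) ^ ((-s : ℝ) : ℂ)‖ ≤
      Real.exp (u * R) * Real.exp (-(u * -w.re) * t) := by
  rw [norm_mul, norm_cpow_real, norm_exp_mul_add_mul]
  exact mul_le_of_le_one_right (by positivity) (rpow_le_one_of_one_le_of_nonpos ht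
    (neg_nonpos.mpr hs))

lemma integrableOn_exp_mul_cpow_ray (hw : w ∈ slitPlane) (hre : w.re < 0) (hu : 0 < u)
    (hR : 0 ≤ R) (hRw : ∀ t : ℝ, 0 < t → 1 ≤ ‖(R + t * w : ℂ)‖) {s : ℝ} (hs : 0 ≤ s) :
    IntegrableOn (fun t : ℝ ↦ cexp (u * (R + t * w)) * (R + t * w : ℂ) ^ ((-s : ℝ) : ℂ))
      (Ioi 0) :=
  integrableOn_ray_of_norm_le (p := 0) hw (differentiableOn_exp_mul_cpow u _).continuousOn hR
    (by norm_num) (mul_pos hu (neg_pos.mpr hre)) fun t ht ↦ by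
      simpa using norm_exp_mul_cpow_ray_le (u := u) hs (hRw t ht)

lemma im_mul_integral_exp_mul_cpow_ray_zero (hre : w.re < 0) (him : 0 < w.im) (hu : 0 < u)
    {s : ℝ} (hs0 : 0 < s) (hs1 : s < 1) :
    (w * ∫ t in Ioi (0 : ℝ), cexp (u * (t * w)) * (t * w : ℂ) ^ ((-s : ℝ) : ℂ)).im =
      π * (u ^ (s - 1) / Real.Gamma s) := by
  have hw0 : w ≠ 0 := fun h ↦ by simp [h] at him
  have hκ : 0 < (-(u * w)).re := by
    rw [neg_re, re_ofReal_mul]; exact neg_pos.mpr (mul_neg_of_pos_of_neg hu hre)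
  have hint : w * ∫ t in Ioi (0 : ℝ), cexp (u * (t * w)) * (t * w : ℂ) ^ ((-s : ℝ) : ℂ) =
      (u ^ (s - 1) * Real.Gamma (1 - s) : ℝ) * cexp ((π * (1 - s) : ℝ) * I) := by
    have hrw : ∫ t in Ioi (0 : ℝ), cexp (u * (t * w)) * (t * w : ℂ) ^ ((-s : ℝ) : ℂ) =
        w ^ ((-s : ℝ) : ℂ) *
          ∫ t in Ioi (0 : ℝ), (t : ℂ) ^ ((-s : ℝ) : ℂ) * cexp (-(-(u * w) * t)) := by
      rw [← integral_const_mul]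
      refine setIntegral_congr_fun measurableSet_Ioi fun t ht ↦ ?_
      simp only [ofReal_mul_cpow ht hw0]
      ring_nf
    have hpow : w * w ^ ((-s : ℝ) : ℂ) = w ^ ((1 - s : ℝ) : ℂ) := by
      rw [mul_comm, cpow_mul_self hw0]; congr 1; push_cast; ring
    have hphase := cpow_mul_neg_mul_cpow_neg him hu (1 - s)
    rw [neg_sub, ← hpow] at hphase
    rw [hrw, integral_cpow_mul_exp_neg_mul hκ (by linarith)]
    have hexp : (-(((-s : ℝ) : ℂ) + 1)) = -((1 - s : ℝ) : ℂ) := by push_cast; ring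
    rw [hexp, neg_add_eq_sub, ofReal_mul]
    linear_combination (Real.Gamma (1 - s) : ℂ) * hphase
  have hΓ : Real.Gamma s ≠ 0 := (Real.Gamma_pos_of_pos hs0).ne'
  have hsin : Real.sin (π * s) ≠ 0 :=
    (Real.sin_pos_of_pos_of_lt_pi (by positivity) (by nlinarith [Real.pi_pos])).ne'
  have hrefl := Real.Gamma_mul_Gamma_one_sub s
  rw [eq_div_iff hsin] at hrefl
  rw [hint, im_ofReal_mul, exp_ofReal_mul_I_im, mul_one_sub, Real.sin_pi_sub]
  rw [mul_div_assoc', eq_div_iff hΓ]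
  linear_combination u ^ (s - 1) * hrefl

lemma continuousWithinAt_integral_exp_mul_cpow_ray (hw : w ∈ slitPlane) (hre : w.re < 0)
    (hu : 0 < u) (hR : 0 ≤ R) (hRw : ∀ t : ℝ, 0 < t → 1 ≤ ‖(R + t * w : ℂ)‖) {s : ℝ} :
    ContinuousWithinAt (fun s : ℝ ↦
      ∫ t in Ioi (0 : ℝ), cexp (u * (R + t * w)) * (R + t * w : ℂ) ^ ((-s : ℝ) : ℂ)) (Ici 0) s := by
  refine continuousWithinAt_of_dominated
    (bound := fun t ↦ Real.exp (u * R) * Real.exp (-(u * -w.re) * t)) ?_ ?_ ?_ ?_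
  · exact eventually_nhdsWithin_of_forall fun s hs ↦
      (integrableOn_exp_mul_cpow_ray hw hre hu hR hRw hs).aestronglyMeasurable
  · exact eventually_nhdsWithin_of_forall fun s hs ↦ ae_restrict_of_forall_mem measurableSet_Ioi
      fun t ht ↦ norm_exp_mul_cpow_ray_le hs (hRw t ht)
  · simpa using (integrableOn_rpow_mul_exp_neg_mul (p := 0) (by norm_num)
      (mul_pos hu (neg_pos.mpr hre))).const_mul (Real.exp (u * R))
  · refine ae_restrict_of_forall_mem measurableSet_Ioi fun t ht ↦ ?_
    have hne : (R + t * w : ℂ) ≠ 0 := norm_pos_iff.mp (one_pos.trans_le (hRw t ht))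
    exact (continuousAt_const.mul (ContinuousAt.const_cpow (by fun_prop)
      (Or.inl hne))).continuousWithinAt

/-- The value at `s = 1` is reached by continuity, because there the integrand is not integrable at
the vertex of the unshifted ray. -/
lemma im_mul_integral_exp_mul_cpow_ray_of_le_one (hre : w.re < 0) (him : 0 < w.im) (hu : 0 < u)
    (hR : 0 < R) (hRw : ∀ t : ℝ, 0 < t → 1 ≤ ‖(R + t * w : ℂ)‖) {s : ℝ} (hs0 : 0 < s)
    (hs1 : s ≤ 1) :
    (w * ∫ t in Ioi (0 : ℝ), cexp (u * (R + t * w)) * (R + t * w : ℂ) ^ ((-s : ℝ) : ℂ)).im =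
      π * (u ^ (s - 1) / Real.Gamma s) := by
  have hw : w ∈ slitPlane := Or.inr him.ne'
  have hlt : EqOn (fun s : ℝ ↦ (w * ∫ t in Ioi (0 : ℝ),
      cexp (u * (R + t * w)) * (R + t * w : ℂ) ^ ((-s : ℝ) : ℂ)).im)
      (fun s ↦ π * (u ^ (s - 1) / Real.Gamma s)) (Ioo 0 1) := fun s hs ↦ by
    refine .trans ?_ (im_mul_integral_exp_mul_cpow_ray_zero hre him hu hs.1 hs.2)
    refine im_mul_integral_shifted_ray (F := fun z ↦ cexp (u * z) * z ^ ((-s : ℝ) : ℂ)) (C := 1)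
      hw hre (differentiableOn_exp_mul_cpow u _) (fun x hx ↦ ?_) hs.1.le hs.2 hu
      (fun z _ ↦ ?_) hR
    · rw [← ofReal_cpow hx.le, ← ofReal_mul, ← ofReal_exp, ← ofReal_mul, ofReal_im]
    · rw [norm_mul, norm_cpow_real, norm_exp, re_ofReal_mul, one_mul, mul_comm]
  refine hlt.of_subset_closure (t := Ioc 0 1) ?_ ?_ Ioo_subset_Ioc_self ?_ ⟨hs0, hs1⟩
  · exact fun s _ ↦ continuous_im.continuousAt.comp_continuousWithinAt <|
      continuousWithinAt_const.mul <|
      (continuousWithinAt_integral_exp_mul_cpow_ray hw hre hu hR.le hRw).mono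
        fun x hx ↦ hx.1.le
  · intro s hs
    have hΓ := (Real.differentiableAt_Gamma fun m ↦
      (neg_nonpos.mpr m.cast_nonneg |>.trans_lt hs.1).ne').continuousAt
    exact (continuousAt_const.mul ((continuousAt_const.rpow (by fun_prop) (Or.inl hu.ne')).div hΓ
      (Real.Gamma_pos_of_pos hs.1).ne')).continuousWithinAt
  · rw [closure_Ioo zero_ne_one]; exact Ioc_subset_Icc_self

lemma im_mul_integral_exp_mul_cpow_ray_succ (hw : w ∈ slitPlane) (hre : w.re < 0) (hu : 0 < u)
    (hR : 0 < R) (hRw : ∀ t : ℝ, 0 < t → 1 ≤ ‖(R + t * w : ℂ)‖) {s : ℝ} (hs : 0 ≤ s) :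
    s * (w * ∫ t in Ioi (0 : ℝ),
        cexp (u * (R + t * w)) * (R + t * w : ℂ) ^ ((-(s + 1) : ℝ) : ℂ)).im =
      u * (w * ∫ t in Ioi (0 : ℝ),
        cexp (u * (R + t * w)) * (R + t * w : ℂ) ^ ((-s : ℝ) : ℂ)).im := by
  set E : ℝ → ℂ → ℂ := fun s z ↦ cexp (u * z) * z ^ ((-s : ℝ) : ℂ) with hE
  have hint {s : ℝ} (hs : 0 ≤ s) := integrableOn_exp_mul_cpow_ray hw hre hu hR.le hRw hs
  have hderiv : ∀ t ∈ Ici (0 : ℝ), HasDerivAt (fun t : ℝ ↦ E s (R + t * w))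
      (w * (u * E s (R + t * w) - s * E (s + 1) (R + t * w))) t := fun t ht ↦ by
    have hmem := add_mul_mem_slitPlane hw hR.le ht (add_pos_of_pos_of_nonneg hR ht)
    refine hasDerivAt_comp_ray (F := fun z ↦ u * E s z - s * E (s + 1) z) ?_
    have hexp : HasDerivAt (fun z : ℂ ↦ cexp (u * z)) (cexp (u * (R + t * w)) * u)
        (R + t * w) := by
      simpa using ((hasDerivAt_id (R + t * w : ℂ)).const_mul (u : ℂ)).cexp
    refine (hexp.mul ((hasDerivAt_id _).cpow_const hmem)).congr_deriv ?_
    have hsub : ((-s : ℝ) : ℂ) - 1 = ((-(s + 1) : ℝ) : ℂ) := by push_cast; ring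
    simp only [hE, id, hsub]
    push_cast; ring
  have hlim : Tendsto (fun t : ℝ ↦ E s (R + t * w)) atTop (𝓝 0) := by
    have hdecay : Tendsto (fun t ↦ Real.exp (u * R) * Real.exp (-(u * -w.re) * t)) atTop
        (𝓝 0) := by
      simpa using (tendsto_rpow_mul_exp_neg_mul_atTop_nhds_zero 0 _
        (mul_pos hu (neg_pos.mpr hre))).const_mul (Real.exp (u * R))
    refine squeeze_zero_norm' ?_ hdecay
    filter_upwards [eventually_gt_atTop 0] with t ht
    exact norm_exp_mul_cpow_ray_le hs (hRw t ht)
  have hint_u := (hint hs).const_mul (u : ℂ)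
  have hint_s := (hint (add_nonneg hs zero_le_one)).const_mul (s : ℂ)
  have hFTC := integral_Ioi_of_hasDerivAt_of_tendsto' hderiv
    ((hint_u.sub hint_s).const_mul w) hlim
  have hvertex : (E s R).im = 0 := by
    simp only [hE, ← ofReal_cpow hR.le, ← ofReal_mul, ← ofReal_exp, ofReal_im]
  rw [integral_const_mul, integral_sub hint_u hint_s, integral_const_mul, integral_const_mul,
    ofReal_zero, zero_mul, add_zero, zero_sub] at hFTC
  have him := congrArg Complex.im hFTC
  rw [neg_im, hvertex, neg_zero, mul_sub, mul_left_comm, mul_left_comm w (s : ℂ), sub_im,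
    im_ofReal_mul, im_ofReal_mul, sub_eq_zero] at him
  exact him.symm

/-- Hankel's contour integral for `1 / Γ(s)`, folded onto the upper half of the contour. -/
lemma im_mul_integral_exp_mul_cpow_ray (hre : w.re < 0) (him : 0 < w.im) (hu : 0 < u)
    (hR : 0 < R) (hRw : ∀ t : ℝ, 0 < t → 1 ≤ ‖(R + t * w : ℂ)‖) {s : ℝ} (hs : 0 < s) :
    (w * ∫ t in Ioi (0 : ℝ), cexp (u * (R + t * w)) * (R + t * w : ℂ) ^ ((-s : ℝ) : ℂ)).im =
      π * (u ^ (s - 1) / Real.Gamma s) := by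
  suffices h : ∀ n : ℕ, ∀ s : ℝ, 0 < s → s ≤ n + 1 → (w * ∫ t in Ioi (0 : ℝ),
      cexp (u * (R + t * w)) * (R + t * w : ℂ) ^ ((-s : ℝ) : ℂ)).im =
        π * (u ^ (s - 1) / Real.Gamma s) from
    h ⌈s⌉₊ s hs ((Nat.le_ceil s).trans (by linarith))
  intro n
  induction n with
  | zero =>
    intro s hs0 hs1
    exact im_mul_integral_exp_mul_cpow_ray_of_le_one hre him hu hR hRw hs0 (by simpa using hs1)
  | succ n ih =>
    intro s hs0 hsn
    rcases le_or_gt s 1 with h | h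
    · exact im_mul_integral_exp_mul_cpow_ray_of_le_one hre him hu hR hRw hs0 h
    · have hs' : 0 < s - 1 := sub_pos.mpr h
      have hstep := im_mul_integral_exp_mul_cpow_ray_succ (Or.inr him.ne') hre hu hR hRw hs'.le
      rw [ih (s - 1) hs' (by push_cast at hsn; linarith), sub_add_cancel] at hstep
      have hΓ := Real.Gamma_add_one hs'.ne'
      have hΓ0 := (Real.Gamma_pos_of_pos hs').ne'
      have hu1 : u ^ (s - 1) = u ^ (s - 1 - 1) * u := by
        rw [← Real.rpow_add_one hu.ne', sub_add_cancel]
      rw [sub_add_cancel] at hΓ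
      rw [hΓ, hu1]
      field_simp at hstep ⊢
      linear_combination hstep

end Hankel

/-! ### The Mittag-Leffler series -/

/-- The function `z ↦ z ^ (ρ - 1) / (a + z ^ ρ)`, which is the Laplace transform of
`t ↦ E_ρ (-a t ^ ρ)` with `E_ρ` the Mittag-Leffler function. -/
noncomputable def mittagLefflerTransform (ρ a : ℝ) (z : ℂ) : ℂ :=
  z ^ ((ρ - 1 : ℝ) : ℂ) / (a + z ^ (ρ : ℂ))

section MittagLeffler

variable {ρ a u R : ℝ} {w : ℂ}

lemma mul_sin_le_norm_add_cpow (hρ0 : 0 ≤ ρ) (hρ1 : ρ ≤ 1) (ha : 0 ≤ a) (z : ℂ) :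
    a * Real.sin (π * ρ) ≤ ‖(a + z ^ (ρ : ℂ) : ℂ)‖ := by
  refine le_of_sq_le_sq ?_ (norm_nonneg _)
  set r := ‖z ^ (ρ : ℂ)‖ with hr
  have hre : r * Real.cos (π * ρ) ≤ (z ^ (ρ : ℂ)).re := by
    rw [cpow_ofReal_re, hr, norm_cpow_real]
    refine mul_le_mul_of_nonneg_left ?_ (by positivity)
    rw [← Real.cos_abs (z.arg * ρ), abs_mul, abs_of_nonneg hρ0]
    exact Real.cos_le_cos_of_nonneg_of_le_pi (by positivity) (by nlinarith [Real.pi_pos])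
      (mul_le_mul_of_nonneg_right (abs_arg_le_pi z) hρ0)
  have hr_sq : r ^ 2 = (z ^ (ρ : ℂ)).re ^ 2 + (z ^ (ρ : ℂ)).im ^ 2 := by
    rw [hr, Complex.sq_norm, normSq_apply]; ring
  calc (a * Real.sin (π * ρ)) ^ 2
      = a ^ 2 - (a * Real.cos (π * ρ)) ^ 2 := by rw [mul_pow, Real.sin_sq]; ring
    _ ≤ a ^ 2 + 2 * a * (r * Real.cos (π * ρ)) + r ^ 2 := by
        nlinarith [sq_nonneg (r + a * Real.cos (π * ρ))]
    _ ≤ a ^ 2 + 2 * a * (z ^ (ρ : ℂ)).re + r ^ 2 := by gcongr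
    _ = ‖(a + z ^ (ρ : ℂ) : ℂ)‖ ^ 2 := by
        rw [hr_sq, Complex.sq_norm, normSq_apply, add_re, add_im, ofReal_re, ofReal_im]; ring

lemma mul_sin_pi_pos (hρ0 : 0 < ρ) (hρ1 : ρ < 1) (ha : 0 < a) : 0 < a * Real.sin (π * ρ) :=
  mul_pos ha (Real.sin_pos_of_pos_of_lt_pi (by positivity) (by nlinarith [Real.pi_pos]))

lemma add_cpow_ne_zero (hρ0 : 0 < ρ) (hρ1 : ρ < 1) (ha : 0 < a) (z : ℂ) :
    (a + z ^ (ρ : ℂ) : ℂ) ≠ 0 :=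
  norm_pos_iff.mp ((mul_sin_pi_pos hρ0 hρ1 ha).trans_le
    (mul_sin_le_norm_add_cpow hρ0.le hρ1.le ha.le z))

lemma differentiableOn_mittagLefflerTransform (hρ0 : 0 < ρ) (hρ1 : ρ < 1) (ha : 0 < a) :
    DifferentiableOn ℂ (mittagLefflerTransform ρ a) slitPlane := fun z hz ↦
  ((differentiableAt_id.cpow_const hz).div ((differentiableAt_id.cpow_const hz).const_add _)
    (add_cpow_ne_zero hρ0 hρ1 ha z)).differentiableWithinAt

lemma norm_mittagLefflerTransform_le (hρ0 : 0 < ρ) (hρ1 : ρ < 1) (ha : 0 < a) (z : ℂ) :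
    ‖mittagLefflerTransform ρ a z‖ ≤ (a * Real.sin (π * ρ))⁻¹ * ‖z‖ ^ (-(1 - ρ)) := by
  have hpos := mul_sin_pi_pos hρ0 hρ1 ha
  rw [mittagLefflerTransform, norm_div, norm_cpow_real, neg_sub, inv_mul_eq_div]
  gcongr
  exact mul_sin_le_norm_add_cpow hρ0.le hρ1.le ha.le z

lemma mittagLefflerTransform_ofReal (ρ a : ℝ) {x : ℝ} (hx : 0 ≤ x) :
    mittagLefflerTransform ρ a x = (x ^ (ρ - 1) / (a + x ^ ρ) : ℝ) := by
  rw [mittagLefflerTransform, ← ofReal_cpow hx, ← ofReal_cpow hx]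
  push_cast; rfl

lemma im_mul_integral_mittagLefflerTransform_shift (hρ0 : 0 < ρ) (hρ1 : ρ < 1) (ha : 0 < a)
    (hw : w ∈ slitPlane) (hre : w.re < 0) (hu : 0 < u) (hR : 0 < R) :
    (w * ∫ t in Ioi (0 : ℝ),
        cexp (u * (R + t * w)) * mittagLefflerTransform ρ a (R + t * w)).im =
      (w * ∫ t in Ioi (0 : ℝ), cexp (u * (t * w)) * mittagLefflerTransform ρ a (t * w)).im := by
  refine im_mul_integral_shifted_ray (F := fun z ↦ cexp (u * z) * mittagLefflerTransform ρ a z)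
    (C := (a * Real.sin (π * ρ))⁻¹) (q := 1 - ρ) hw hre ?_ (fun x hx ↦ ?_) (by linarith)
    (by linarith) hu (fun z _ ↦ ?_) hR
  · exact (by fun_prop : Differentiable ℂ fun z : ℂ ↦ cexp (u * z)).differentiableOn.mul
      (differentiableOn_mittagLefflerTransform hρ0 hρ1 ha)
  · rw [mittagLefflerTransform_ofReal _ _ hx.le, ← ofReal_mul, ← ofReal_exp, ← ofReal_mul,
      ofReal_im]
  · rw [norm_mul, norm_exp, re_ofReal_mul, mul_comm, ← mul_assoc]
    gcongr
    exact norm_mittagLefflerTransform_le hρ0 hρ1 ha z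

lemma norm_pow_mul_cpow (a ρ : ℝ) {z : ℂ} (n : ℕ) :
    ‖((-a : ℝ) : ℂ) ^ n * z ^ ((-(1 + ρ * n) : ℝ) : ℂ)‖ = |a| ^ n * ‖z‖ ^ (-(1 + ρ * n)) := by
  rw [norm_mul, norm_pow, norm_real, norm_cpow_real, Real.norm_eq_abs, abs_neg]

lemma hasSum_mittagLefflerTransform {z : ℂ} (hz : z ≠ 0) (h : |a| < ‖z‖ ^ ρ) :
    HasSum (fun n : ℕ ↦ ((-a : ℝ) : ℂ) ^ n * z ^ ((-(1 + ρ * n) : ℝ) : ℂ))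
      (mittagLefflerTransform ρ a z) := by
  have hzρ : z ^ (ρ : ℂ) ≠ 0 := by simp [cpow_eq_zero_iff, hz]
  have hratio : ‖(-(a : ℂ)) / z ^ (ρ : ℂ)‖ < 1 := by
    rw [norm_div, norm_neg, norm_real, norm_cpow_real, Real.norm_eq_abs]
    exact (div_lt_one ((abs_nonneg a).trans_lt h)).mpr h
  have hterm (n : ℕ) : ((-a : ℝ) : ℂ) ^ n * z ^ ((-(1 + ρ * n) : ℝ) : ℂ) =
      z⁻¹ * (-(a : ℂ) / z ^ (ρ : ℂ)) ^ n := by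
    have hexp : ((-(1 + ρ * n) : ℝ) : ℂ) = -1 - n * ρ := by push_cast; ring
    rw [hexp, cpow_sub _ _ hz, cpow_neg_one, cpow_nat_mul, div_pow, ofReal_neg]
    ring
  have hclosed : mittagLefflerTransform ρ a z = z⁻¹ * (1 - -(a : ℂ) / z ^ (ρ : ℂ))⁻¹ := by
    have hsub : 1 - -(a : ℂ) / z ^ (ρ : ℂ) = (a + z ^ (ρ : ℂ)) / z ^ (ρ : ℂ) := by
      field_simp; ring
    rw [hsub, inv_div, mittagLefflerTransform, ofReal_sub, ofReal_one, cpow_sub _ _ hz, cpow_one]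
    ring
  rw [hclosed]
  simpa only [hterm] using (hasSum_geometric_of_norm_lt_one hratio).mul_left z⁻¹

lemma exists_pos_forall_le_norm_add_mul (hw : w ∈ slitPlane) (M : ℝ) :
    ∃ R : ℝ, 0 < R ∧ ∀ t : ℝ, 0 ≤ t → M ≤ ‖(R + t * w : ℂ)‖ := by
  obtain ⟨m, hm, hlow⟩ := exists_mul_add_le_norm_add_mul hw
  refine ⟨(|M| + 1) / m, by positivity, fun t ht ↦ ?_⟩
  calc M ≤ m * ((|M| + 1) / m) := by rw [mul_div_cancel₀ _ hm.ne']; linarith [le_abs_self M]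
    _ ≤ m * ((|M| + 1) / m + t) := by gcongr; linarith
    _ ≤ _ := hlow _ _ (by positivity) ht

lemma norm_pow_mul_exp_mul_cpow_ray_le {t : ℝ} (h1 : 1 ≤ ‖(R + t * w : ℂ)‖)
    (ha : 2 * |a| ≤ ‖(R + t * w : ℂ)‖ ^ ρ) (n : ℕ) :
    ‖((-a : ℝ) : ℂ) ^ n *
        (cexp (u * (R + t * w)) * (R + t * w : ℂ) ^ ((-(1 + ρ * n) : ℝ) : ℂ))‖ ≤
      (1 / 2) ^ n * (Real.exp (u * R) * Real.exp (-(u * -w.re) * t)) := by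
  set r := ‖(R + t * w : ℂ)‖
  have hr : 0 < r := one_pos.trans_le h1
  have hgeom : |a| ^ n * r ^ (-(1 + ρ * n)) ≤ (1 / 2) ^ n := by
    calc |a| ^ n * r ^ (-(1 + ρ * n)) = (|a| / r ^ ρ) ^ n * r⁻¹ := by
          rw [Real.rpow_neg hr.le, Real.rpow_add hr, Real.rpow_one, Real.rpow_mul_natCast hr.le,
            div_pow, mul_inv]
          ring
      _ ≤ (1 / 2) ^ n * 1 := by
          have hratio : |a| / r ^ ρ ≤ 1 / 2 := by
            rw [div_le_iff₀ (by positivity)]; linarith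
          exact mul_le_mul (pow_le_pow_left₀ (by positivity) hratio n)
            (inv_le_one_of_one_le₀ h1) (by positivity) (by positivity)
      _ = (1 / 2) ^ n := mul_one _
  rw [mul_left_comm, norm_mul, norm_pow_mul_cpow, norm_exp_mul_add_mul, mul_comm]
  gcongr

lemma hasSum_mul_integral_mittagLefflerTransform_shift (hρ : 0 ≤ ρ) (hw : w ∈ slitPlane)
    (hre : w.re < 0) (hu : 0 < u) (hR : 0 ≤ R)
    (h1 : ∀ t : ℝ, 0 < t → 1 ≤ ‖(R + t * w : ℂ)‖)
    (ha : ∀ t : ℝ, 0 < t → 2 * |a| < ‖(R + t * w : ℂ)‖ ^ ρ) :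
    HasSum (fun n : ℕ ↦ ((-a : ℝ) ^ n : ℂ) * (w * ∫ t in Ioi (0 : ℝ),
        cexp (u * (R + t * w)) * (R + t * w : ℂ) ^ ((-(1 + ρ * n) : ℝ) : ℂ)))
      (w * ∫ t in Ioi (0 : ℝ),
        cexp (u * (R + t * w)) * mittagLefflerTransform ρ a (R + t * w)) := by
  have hdecay : IntegrableOn (fun t ↦ Real.exp (u * R) * Real.exp (-(u * -w.re) * t)) (Ioi 0) := by
    simpa only [Real.rpow_zero, one_mul] using! (integrableOn_rpow_mul_exp_neg_mul (p := 0)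
      (by norm_num) (mul_pos hu (neg_pos.mpr hre))).const_mul (Real.exp (u * R))
  have hsum := hasSum_integral_of_dominated_convergence (μ := volume.restrict (Ioi (0 : ℝ)))
    (F := fun (n : ℕ) (t : ℝ) ↦ ((-a : ℝ) : ℂ) ^ n *
      (cexp (u * (R + t * w)) * (R + t * w : ℂ) ^ ((-(1 + ρ * n) : ℝ) : ℂ)))
    (f := fun t ↦ cexp (u * (R + t * w)) * mittagLefflerTransform ρ a (R + t * w))
    (fun n t ↦ (1 / 2) ^ n * (Real.exp (u * R) * Real.exp (-(u * -w.re) * t)))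
    (fun n ↦ ((integrableOn_exp_mul_cpow_ray hw hre hu hR h1
      (by positivity)).const_mul _).aestronglyMeasurable)
    (fun n ↦ ae_restrict_of_forall_mem measurableSet_Ioi fun t ht ↦
      norm_pow_mul_exp_mul_cpow_ray_le (h1 t ht) (ha t ht).le n)
    (.of_forall fun t ↦ summable_geometric_two.mul_right _)
    (by simpa only [tsum_mul_right] using hdecay.const_mul _)
    (ae_restrict_of_forall_mem measurableSet_Ioi fun t ht ↦ by
      have hlt : |a| < ‖(R + t * w : ℂ)‖ ^ ρ := by linarith [ha t ht, abs_nonneg a]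
      simpa only [mul_left_comm] using (hasSum_mittagLefflerTransform
        (norm_pos_iff.mp (one_pos.trans_le (h1 t ht))) hlt).mul_left (cexp (u * (R + t * w))))
  simpa only [integral_const_mul, mul_left_comm w, ofReal_neg] using hsum.mul_left w

/-- Bromwich's inversion of the Laplace transform of the Mittag-Leffler function, with the contour
folded onto its upper half. -/
theorem hasSum_im_mul_integral_mittagLefflerTransform (hρ0 : 0 < ρ) (hρ1 : ρ < 1) (ha : 0 < a)
    (hre : w.re < 0) (him : 0 < w.im) (hu : 0 < u) :
    HasSum (fun n : ℕ ↦ (-a) ^ n * u ^ (ρ * n) / Real.Gamma (1 + ρ * n))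
      ((w * ∫ t in Ioi (0 : ℝ),
        cexp (u * (t * w)) * mittagLefflerTransform ρ a (t * w)).im / π) := by
  have hw : w ∈ slitPlane := Or.inr him.ne'
  obtain ⟨R, hR, hlarge⟩ := exists_pos_forall_le_norm_add_mul hw (max 1 ((3 * a) ^ ρ⁻¹))
  have h1 (t : ℝ) (ht : 0 < t) : 1 ≤ ‖(R + t * w : ℂ)‖ := (le_max_left _ _).trans (hlarge t ht.le)
  have h2 (t : ℝ) (ht : 0 < t) : 2 * |a| < ‖(R + t * w : ℂ)‖ ^ ρ := by
    have h3 : 3 * a ≤ ‖(R + t * w : ℂ)‖ ^ ρ :=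
      (Real.rpow_inv_le_iff_of_pos (by positivity) (norm_nonneg _) hρ0).mp
        ((le_max_right _ _).trans (hlarge t ht.le))
    rw [abs_of_pos ha]; linarith
  have hsum := (hasSum_im (hasSum_mul_integral_mittagLefflerTransform_shift hρ0.le hw hre hu hR.le
    h1 h2)).div_const π
  rw [im_mul_integral_mittagLefflerTransform_shift hρ0 hρ1 ha hw hre hu hR] at hsum
  refine hsum.congr_fun fun n ↦ ?_
  have hs : 0 < 1 + ρ * n := by positivity
  rw [← ofReal_pow, im_ofReal_mul, im_mul_integral_exp_mul_cpow_ray hre him hu hR h1 hs,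
    add_sub_cancel_left]
  field_simp

end MittagLeffler

/-! ### Integrating over time -/

section Fubini

variable {α b c u : ℝ} {w : ℂ}

lemma norm_exp_sub_one_le_norm_of_re_nonpos {z : ℂ} (hz : z.re ≤ 0) : ‖cexp z - 1‖ ≤ ‖z‖ := by
  simpa using (convex_halfSpace_re_le 0).norm_image_sub_le_of_norm_hasDerivWithin_le (C := 1)
    (fun z _ ↦ (Complex.hasDerivAt_exp z).hasDerivWithinAt)
    (fun z hz ↦ by rw [norm_exp]; exact Real.exp_le_one_iff.mpr hz)
    (show (0 : ℂ) ∈ {z : ℂ | z.re ≤ 0} by simp) hz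

lemma mittagLefflerTransform_eq_sub (hb : b ≠ 0) (hc : c ≠ 0) {z : ℂ} (hz : z ≠ 0)
    (hden : (c * z + z ^ (α : ℂ) / b : ℂ) ≠ 0) :
    mittagLefflerTransform (α - 1) (c * b) z / c =
      1 / (c * z) - 1 / (c * z + z ^ (α : ℂ) / b) := by
  have hb' : (b : ℂ) ≠ 0 := ofReal_ne_zero.mpr hb
  have hc' : (c : ℂ) ≠ 0 := ofReal_ne_zero.mpr hc
  have hpow : z ^ (α : ℂ) = z ^ ((α - 1 : ℝ) : ℂ) * z := by
    rw [cpow_mul_self hz]; push_cast; ring_nf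
  have hpow' : z ^ ((α - 1 : ℝ) : ℂ) = z ^ ((α - 1 - 1 : ℝ) : ℂ) * z := by
    rw [cpow_mul_self hz]; push_cast; ring_nf
  have hfactor : c * z + z ^ (α : ℂ) / b = z * (c * b + z ^ ((α - 1 : ℝ) : ℂ)) / b := by
    rw [hpow]; field_simp
  have hden' : (c * b + z ^ ((α - 1 : ℝ) : ℂ) : ℂ) ≠ 0 := fun h ↦ hden (by rw [hfactor, h]; simp)
  rw [hfactor, mittagLefflerTransform, ofReal_mul]
  rw [hpow'] at hden' ⊢
  field_simp
  ring

lemma integral_exp_mul_exp_sub_one (hb : 0 < b) (hc : 0 < c) {z : ℂ} (hz : z.re < 0)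
    (hzα : (z ^ (α : ℂ)).re ≤ 0) :
    ∫ s in Ioi (0 : ℝ), cexp ((u + c * s : ℝ) * z) * (cexp (s / b * z ^ (α : ℂ)) - 1) =
      cexp (u * z) * mittagLefflerTransform (α - 1) (c * b) z / c := by
  have hz0 : z ≠ 0 := fun h ↦ by simp [h] at hz
  have hre : (c * z).re < 0 := by rw [re_ofReal_mul]; exact mul_neg_of_pos_of_neg hc hz
  have hre' : (c * z + z ^ (α : ℂ) / b).re < 0 := by
    rw [add_re, div_ofReal_re]
    exact add_neg_of_neg_of_nonpos hre (div_nonpos_of_nonpos_of_nonneg hzα hb.le)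
  have hsplit (s : ℝ) : cexp ((u + c * s : ℝ) * z) * (cexp (s / b * z ^ (α : ℂ)) - 1) =
      cexp (u * z) * (cexp ((c * z + z ^ (α : ℂ) / b) * s) - cexp (c * z * s)) := by
    rw [mul_sub_one, mul_sub, ← Complex.exp_add, ← Complex.exp_add, ← Complex.exp_add]
    push_cast; ring_nf
  simp only [hsplit]
  rw [integral_const_mul, integral_sub (integrableOn_exp_mul_complex_Ioi hre' 0)
    (integrableOn_exp_mul_complex_Ioi hre 0), integral_exp_mul_complex_Ioi hre',
    integral_exp_mul_complex_Ioi hre]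
  rw [ofReal_zero, mul_zero, mul_zero, Complex.exp_zero, mul_div_assoc,
    mittagLefflerTransform_eq_sub hb.ne' hc.ne' hz0 fun h ↦ by simp [h] at hre']
  ring

lemma integrable_prod_rpow_mul_exp_mul (hα : 1 < α) {γ δ : ℝ} (hγ : 0 < γ) (hδ : 0 < δ) :
    Integrable (fun p : ℝ × ℝ ↦
        p.2 ^ α * Real.exp (-γ * p.2) * (p.1 * Real.exp (-(δ * p.2 * p.1))))
      ((volume.restrict (Ioi 0)).prod (volume.restrict (Ioi 0))) := by
  have hmeas : Measurable fun p : ℝ × ℝ ↦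
      p.2 ^ α * Real.exp (-γ * p.2) * (p.1 * Real.exp (-(δ * p.2 * p.1))) := by fun_prop
  refine (integrable_prod_iff' hmeas.aestronglyMeasurable).mpr ⟨?_, ?_⟩
  · refine ae_restrict_of_forall_mem measurableSet_Ioi fun x hx ↦ ?_
    have hmoment := integrableOn_rpow_mul_exp_neg_mul (p := 1) (by norm_num) (mul_pos hδ hx)
    simp only [Real.rpow_one, neg_mul] at hmoment
    exact hmoment.const_mul (x ^ α * Real.exp (-γ * x))
  · refine IntegrableOn.congr_fun ((integrableOn_rpow_mul_exp_neg_mul (p := α - 2) (by linarith)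
      hγ).const_mul (δ⁻¹ ^ 2)) (fun x hx ↦ ?_) measurableSet_Ioi
    have hx' : 0 < x := hx
    have hmoment : ∫ s in Ioi (0 : ℝ), s * Real.exp (-(δ * x * s)) = (δ * x)⁻¹ ^ 2 := by
      have := Real.integral_rpow_mul_exp_neg_mul_Ioi two_pos (mul_pos hδ hx')
      norm_num at this
      simpa using this
    have hnorm : ∀ s ∈ Ioi (0 : ℝ), ‖x ^ α * Real.exp (-γ * x) * (s * Real.exp (-(δ * x * s)))‖ =
        x ^ α * Real.exp (-γ * x) * (s * Real.exp (-(δ * x * s))) := fun s hs ↦ by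
      have hs' : 0 < s := hs
      exact Real.norm_of_nonneg (by positivity)
    rw [setIntegral_congr_fun measurableSet_Ioi hnorm, integral_const_mul, hmoment,
      Real.rpow_sub hx', Real.rpow_two]
    ring

lemma integrable_prod_exp_mul_exp_sub_one (hα : 1 < α) (hb : 0 < b) (hc : 0 < c) (hu : 0 < u)
    (hre : w.re < 0) (hwα : (w ^ (α : ℂ)).re ≤ 0) :
    Integrable (fun p : ℝ × ℝ ↦ cexp ((u + c * p.1 : ℝ) * (p.2 * w)) *
        (cexp (p.1 / b * (p.2 * w) ^ (α : ℂ)) - 1))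
      ((volume.restrict (Ioi 0)).prod (volume.restrict (Ioi 0))) := by
  have hw0 : w ≠ 0 := fun h ↦ by simp [h] at hre
  refine ((integrable_prod_rpow_mul_exp_mul hα (mul_pos hu (neg_pos.mpr hre))
    (mul_pos hc (neg_pos.mpr hre))).const_mul (‖w ^ (α : ℂ)‖ / b)).mono'
    (Measurable.aestronglyMeasurable (by fun_prop)) ?_
  rw [Measure.prod_restrict]
  refine ae_restrict_of_forall_mem (measurableSet_Ioi.prod measurableSet_Ioi) fun p ⟨hs, hx⟩ ↦ ?_
  have hs' : 0 < p.1 := hs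
  have hx' : 0 < p.2 := hx
  have harg : p.1 / b * (p.2 * w) ^ (α : ℂ) = (p.1 / b * p.2 ^ α : ℝ) * w ^ (α : ℂ) := by
    rw [ofReal_mul_cpow hx' hw0, ← ofReal_cpow hx'.le]; push_cast; ring
  have hdiff : ‖cexp (p.1 / b * (p.2 * w) ^ (α : ℂ)) - 1‖ ≤ p.1 / b * p.2 ^ α * ‖w ^ (α : ℂ)‖ := by
    rw [harg]
    refine (norm_exp_sub_one_le_norm_of_re_nonpos ?_).trans_eq ?_
    · rw [re_ofReal_mul]; exact mul_nonpos_of_nonneg_of_nonpos (by positivity) hwα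
    · rw [norm_mul, Complex.norm_of_nonneg (by positivity : (0 : ℝ) ≤ _)]
  calc _ ≤ Real.exp ((u + c * p.1) * (p.2 * w.re)) * (p.1 / b * p.2 ^ α * ‖w ^ (α : ℂ)‖) := by
        rw [norm_mul, norm_exp, re_ofReal_mul, re_ofReal_mul]
        gcongr
    _ = _ := by
        have hexp : (u + c * p.1) * (p.2 * w.re) =
            -(u * -w.re) * p.2 + -(c * -w.re * p.2 * p.1) := by ring
        rw [hexp, Real.exp_add]; ring

lemma integral_im_mul_integral_exp_mul_exp_sub_one (hα : 1 < α) (hb : 0 < b) (hc : 0 < c)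
    (hu : 0 < u) (hre : w.re < 0) (hwα : (w ^ (α : ℂ)).re ≤ 0) :
    c * ∫ s in Ioi (0 : ℝ), (w * ∫ t in Ioi (0 : ℝ), cexp ((u + c * s : ℝ) * (t * w)) *
        (cexp (s / b * (t * w) ^ (α : ℂ)) - 1)).im =
      (w * ∫ t in Ioi (0 : ℝ),
        cexp (u * (t * w)) * mittagLefflerTransform (α - 1) (c * b) (t * w)).im := by
  have hw0 : w ≠ 0 := fun h ↦ by simp [h] at hre
  have hint := integrable_prod_exp_mul_exp_sub_one hα hb hc hu hre hwα
  have hinner : ∀ t ∈ Ioi (0 : ℝ), ∫ s in Ioi (0 : ℝ), cexp ((u + c * s : ℝ) * (t * w)) *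
      (cexp (s / b * (t * w) ^ (α : ℂ)) - 1) =
        cexp (u * (t * w)) * mittagLefflerTransform (α - 1) (c * b) (t * w) / c := fun t ht ↦ by
    refine integral_exp_mul_exp_sub_one hb hc ?_ ?_
    · rw [re_ofReal_mul]; exact mul_neg_of_pos_of_neg ht hre
    · rw [ofReal_mul_cpow ht hw0, ← ofReal_cpow (le_of_lt ht), re_ofReal_mul]
      exact mul_nonpos_of_nonneg_of_nonpos (Real.rpow_nonneg (le_of_lt ht) _) hwα
  have him := imCLM.integral_comp_comm (hint.integral_prod_left.const_mul w)
  simp only [imCLM_apply] at him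
  rw [him, integral_const_mul, integral_integral_swap hint,
    setIntegral_congr_fun measurableSet_Ioi hinner, integral_div, ← mul_div_assoc, div_ofReal_im,
    mul_div_cancel₀ _ hc.ne']

lemma im_mul_integral_exp_mul_exp_sub_one (hre : w.re < 0) (hwα : (w ^ (α : ℂ)).re ≤ 0)
    {y k : ℝ} (hy : 0 < y) (hk : 0 ≤ k) :
    (w * ∫ t in Ioi (0 : ℝ), cexp (y * (t * w)) * (cexp (k * (t * w) ^ (α : ℂ)) - 1)).im =
      (w * ∫ t in Ioi (0 : ℝ), cexp (y * (t * w)) * cexp (k * (t * w) ^ (α : ℂ))).im := by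
  have hw0 : w ≠ 0 := fun h ↦ by simp [h] at hre
  have hyw : (y * w).re < 0 := by rw [re_ofReal_mul]; exact mul_neg_of_pos_of_neg hy hre
  have hrw (t : ℝ) : (y * (t * w) : ℂ) = y * w * t := by ring
  have hint : IntegrableOn (fun t : ℝ ↦ cexp (y * (t * w))) (Ioi 0) := by
    simpa only [hrw] using integrableOn_exp_mul_complex_Ioi hyw 0
  have hint' : IntegrableOn (fun t : ℝ ↦ cexp (y * (t * w)) * cexp (k * (t * w) ^ (α : ℂ)))
      (Ioi 0) := by
    refine Integrable.mono hint (Measurable.aestronglyMeasurable (by fun_prop))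
      (ae_restrict_of_forall_mem measurableSet_Ioi fun t ht ↦ ?_)
    have hre_nonpos : (k * (t * w) ^ (α : ℂ)).re ≤ 0 := by
      rw [ofReal_mul_cpow ht hw0, ← ofReal_cpow (le_of_lt ht), re_ofReal_mul, re_ofReal_mul]
      exact mul_nonpos_of_nonneg_of_nonpos hk
        (mul_nonpos_of_nonneg_of_nonpos (Real.rpow_nonneg (le_of_lt ht) _) hwα)
    rw [norm_mul, norm_exp (k * _)]
    exact mul_le_of_le_one_right (norm_nonneg _) (Real.exp_le_one_iff.mpr hre_nonpos)
  have hreal : w * ∫ t in Ioi (0 : ℝ), cexp (y * (t * w)) = (-y⁻¹ : ℝ) := by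
    simp only [hrw]
    rw [integral_exp_mul_complex_Ioi hyw, ofReal_zero, mul_zero, Complex.exp_zero]
    push_cast
    have : (y : ℂ) ≠ 0 := ofReal_ne_zero.mpr hy.ne'
    field_simp
  simp only [mul_sub_one]
  rw [integral_sub hint' hint, mul_sub, hreal, sub_im, ofReal_im, sub_zero]

end Fubini

/-! ### The stable density -/

section StableDensity

variable {α : ℝ}

lemma one_add_tan_mul_I {x : ℝ} (hx : Real.cos x ≠ 0) :
    (1 + Real.tan x * I : ℂ) = ((-Real.cos x)⁻¹ : ℝ) * cexp ((x - π : ℝ) * I) := by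
  have hcos : (Real.cos x : ℂ) ≠ 0 := ofReal_ne_zero.mpr hx
  rw [Real.tan_eq_sin_div_cos, ofReal_sub, sub_mul, Complex.exp_sub, exp_pi_mul_I,
    exp_ofReal_mul_I]
  rw [ofReal_inv, ofReal_neg, ofReal_div]
  field_simp

lemma exp_mul_I_cpow {θ : ℝ} (hθ : θ ∈ Ioc (-π) π) (s : ℝ) :
    cexp (θ * I) ^ (s : ℂ) = cexp ((θ * s : ℝ) * I) := by
  rw [cpow_def_of_ne_zero (Complex.exp_ne_zero _),
    Complex.log_exp (by simpa using hθ.1) (by simpa using hθ.2)]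
  push_cast; ring_nf

lemma cos_mul_sub_two_div_two_pos (hα : α ∈ Ioo (1 : ℝ) 2) :
    0 < Real.cos (π * (α - 2) / 2) :=
  Real.cos_pos_of_mem_Ioo
    ⟨by nlinarith [Real.pi_pos, hα.1], by nlinarith [Real.pi_pos, hα.2]⟩

lemma one_add_tan_mul_I_cpow_inv_mul (hα : α ∈ Ioo (1 : ℝ) 2) :
    (1 + Real.tan (π * α / 2) * I : ℂ) ^ ((α⁻¹ : ℝ) : ℂ) * cexp ((π / α : ℝ) * I) =
      ((Real.cos (π * (α - 2) / 2))⁻¹ ^ α⁻¹ : ℝ) * I := by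
  have hα0 : 0 < α := one_pos.trans hα.1
  have hb := cos_mul_sub_two_div_two_pos hα
  have hcos : Real.cos (π * α / 2) = -Real.cos (π * (α - 2) / 2) := by
    rw [← Real.cos_add_pi]; ring_nf
  have hθ : π * α / 2 - π ∈ Ioc (-π) π :=
    ⟨by nlinarith [Real.pi_pos, hα.1], by nlinarith [Real.pi_pos, hα.2]⟩
  have hsum : (π * α / 2 - π) * α⁻¹ + π / α = π / 2 := by field_simp; ring
  rw [one_add_tan_mul_I (by rw [hcos]; exact (neg_neg_of_pos hb).ne), hcos, neg_neg,
    ofReal_mul_cpow (inv_pos.mpr hb) (Complex.exp_ne_zero _), exp_mul_I_cpow hθ,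
    ← ofReal_cpow (inv_pos.mpr hb).le, mul_assoc, ← Complex.exp_add, ← add_mul, ← ofReal_add,
    hsum, ofReal_div, ofReal_ofNat, exp_pi_div_two_mul_I]

lemma integral_exp_neg_rpow_mul_cos (hα : 0 < α) (y T : ℝ) :
    ∫ t in Ioi (0 : ℝ), Real.exp (-t ^ α) * Real.cos (t * y - t ^ α * T) =
      (∫ t in Ioi (0 : ℝ), cexp (y * I * t - (1 + T * I) * (t ^ α : ℝ))).re := by
  have hre (t : ℝ) : (y * I * t - (1 + T * I) * (t ^ α : ℝ) : ℂ).re = -t ^ α := by simp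
  have him (t : ℝ) : (y * I * t - (1 + T * I) * (t ^ α : ℝ) : ℂ).im = t * y - t ^ α * T := by
    simp; ring
  have hint : IntegrableOn (fun t : ℝ ↦ cexp (y * I * t - (1 + T * I) * (t ^ α : ℝ)))
      (Ioi 0) := by
    have hdecay := integrableOn_rpow_mul_exp_neg_mul_rpow (s := 0) (by norm_num) hα one_pos
    simp only [Real.rpow_zero, one_mul, neg_mul] at hdecay
    refine hdecay.mono' (Measurable.aestronglyMeasurable (by fun_prop)) (.of_forall fun t ↦ ?_)
    rw [norm_exp, hre]
  rw [← reCLM_apply, ← reCLM.integral_comp_comm hint]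
  simp only [reCLM_apply, exp_re, hre, him]

lemma rpow_mul_integral_exp_neg_rpow_mul_cos (hα : α ∈ Ioo (1 : ℝ) 2) {s : ℝ} (hs : 0 < s)
    (y : ℝ) :
    s ^ (-1 / α) * ∫ t in Ioi (0 : ℝ), Real.exp (-t ^ α) *
        Real.cos (t * s ^ (-1 / α) * y - t ^ α * Real.tan (π * α / 2)) =
      (cexp ((π / α : ℝ) * I) * ∫ t in Ioi (0 : ℝ), cexp (y * cexp ((π / α : ℝ) * I) * t -
        (s / Real.cos (π * (α - 2) / 2) : ℝ) * (t ^ α : ℝ))).im := by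
  have hphase := one_add_tan_mul_I_cpow_inv_mul hα
  have hb := cos_mul_sub_two_div_two_pos hα
  set ω := cexp ((π / α : ℝ) * I)
  set b := Real.cos (π * (α - 2) / 2)
  set σ := s ^ (-1 / α) with hσ
  set κ : ℂ := 1 + Real.tan (π * α / 2) * I with hκ
  set B := b⁻¹ ^ α⁻¹
  have hB0 : (B : ℂ) ≠ 0 := ofReal_ne_zero.mpr (by positivity)
  have hscale : ((s / b : ℝ) : ℂ) ^ ((α⁻¹ : ℝ) : ℂ) * σ = B := by
    have hexp : α⁻¹ + -1 / α = 0 := by rw [neg_div, one_div, add_neg_cancel]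
    rw [← ofReal_cpow (by positivity), ← ofReal_mul, div_eq_mul_inv,
      Real.mul_rpow hs.le (by positivity), mul_right_comm, hσ, ← Real.rpow_add hs, hexp,
      Real.rpow_zero, one_mul]
  have hκ_re : 0 < κ.re := by
    rw [hκ, add_re, one_re, re_ofReal_mul, I_re, mul_zero, add_zero]; exact one_pos
  have hrate_re : 0 < ((s / b : ℝ) : ℂ).re := by rw [ofReal_re]; positivity
  have hrotate := (cpow_inv_mul_integral_exp_sub_mul_rpow hα.1 hκ_re (y * σ * ω / B)).trans
    (cpow_inv_mul_integral_exp_sub_mul_rpow hα.1 hrate_re (y * σ * ω / B)).symm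
  have harg : y * σ * ω / B * κ ^ ((α⁻¹ : ℝ) : ℂ) = (σ * y : ℝ) * I := by
    rw [div_mul_eq_mul_div, div_eq_iff hB0, ofReal_mul]
    linear_combination y * σ * hphase
  have harg' : y * σ * ω / B * ((s / b : ℝ) : ℂ) ^ ((α⁻¹ : ℝ) : ℂ) = y * ω := by
    rw [div_mul_eq_mul_div, div_eq_iff hB0]
    linear_combination y * ω * hscale
  rw [harg, harg'] at hrotate
  simp only [mul_assoc _ σ y]
  rw [integral_exp_neg_rpow_mul_cos (one_pos.trans hα.1), ← re_ofReal_mul, ← I_mul_im]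
  congr 1
  refine mul_left_cancel₀ hB0 ?_
  linear_combination (-σ * ∫ t in Ioi (0 : ℝ), cexp ((σ * y : ℝ) * I * t - κ * (t ^ α : ℝ))) *
    hphase + ω * σ * hrotate + (ω * ∫ t in Ioi (0 : ℝ),
      cexp (y * ω * t - (s / b : ℝ) * (t ^ α : ℝ))) * hscale

lemma pi_div_mem_Ioo (hα : α ∈ Ioo (1 : ℝ) 2) : π / α ∈ Ioo (π / 2) π :=
  ⟨div_lt_div_of_pos_left Real.pi_pos (one_pos.trans hα.1) hα.2,
    div_lt_self Real.pi_pos hα.1⟩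

lemma exp_pi_div_mul_I_re_neg (hα : α ∈ Ioo (1 : ℝ) 2) : (cexp ((π / α : ℝ) * I)).re < 0 := by
  rw [exp_ofReal_mul_I_re]
  have hθ := pi_div_mem_Ioo hα
  exact Real.cos_neg_of_pi_div_two_lt_of_lt hθ.1 (by linarith [hθ.2, Real.pi_pos])

lemma exp_pi_div_mul_I_im_pos (hα : α ∈ Ioo (1 : ℝ) 2) : 0 < (cexp ((π / α : ℝ) * I)).im := by
  rw [exp_ofReal_mul_I_im]
  have hθ := pi_div_mem_Ioo hα
  exact Real.sin_pos_of_pos_of_lt_pi (by linarith [hθ.1, Real.pi_pos]) hθ.2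

lemma exp_pi_div_mul_I_cpow (hα : α ∈ Ioo (1 : ℝ) 2) :
    cexp ((π / α : ℝ) * I) ^ (α : ℂ) = -1 := by
  have hθ := pi_div_mem_Ioo hα
  rw [exp_mul_I_cpow ⟨by linarith [hθ.1, Real.pi_pos], hθ.2.le⟩,
    div_mul_cancel₀ _ (one_pos.trans hα.1).ne', exp_pi_mul_I]

theorem mul_integral_rpow_mul_integral_exp_neg_rpow_mul_cos (hα : α ∈ Ioo (1 : ℝ) 2) {u c : ℝ}
    (hu : 0 < u) (hc : 0 < c) :
    c * ∫ s in Ioi (0 : ℝ), s ^ (-1 / α) * ∫ t in Ioi (0 : ℝ), Real.exp (-t ^ α) *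
        Real.cos (t * s ^ (-1 / α) * (u + c * s) - t ^ α * Real.tan (π * α / 2)) =
      (cexp ((π / α : ℝ) * I) * ∫ t in Ioi (0 : ℝ), cexp (u * (t * cexp ((π / α : ℝ) * I))) *
        mittagLefflerTransform (α - 1) (c * Real.cos (π * (α - 2) / 2))
          (t * cexp ((π / α : ℝ) * I))).im := by
  have hb := cos_mul_sub_two_div_two_pos hα
  have hre := exp_pi_div_mul_I_re_neg hα
  have hωα := exp_pi_div_mul_I_cpow hα
  have hωα_re : (cexp ((π / α : ℝ) * I) ^ (α : ℂ)).re ≤ 0 := by rw [hωα]; simp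
  rw [← integral_im_mul_integral_exp_mul_exp_sub_one hα.1 hb hc hu hre hωα_re]
  congr 1
  refine setIntegral_congr_fun measurableSet_Ioi fun s hs ↦ ?_
  have hs' : 0 < s := hs
  simp only [rpow_mul_integral_exp_neg_rpow_mul_cos hα hs', ← ofReal_div]
  rw [im_mul_integral_exp_mul_exp_sub_one hre hωα_re (by positivity) (by positivity)]
  congr 2
  refine setIntegral_congr_fun measurableSet_Ioi fun t ht ↦ ?_
  simp only [ofReal_mul_cpow ht (Complex.exp_ne_zero _), hωα, ← Complex.exp_add,
    ofReal_cpow (le_of_lt ht)]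
  ring_nf

end StableDensity

end

/-- Infinite-horizon supremum distribution for a spectrally positive `α`-stable Lévy process with
drift `−c`: the integral of the density formula equals the Mittag-Leffler series
`Σ_{n=0}^∞ (−a)^n u^((α−1)n) / Γ(1 + (α−1)n)` with `a = c·cos(π(α−2)/2)`. -/
theorem stable_infinite_horizon_mittag_leffler (α u c : ℝ) (hα : α ∈ Set.Ioo (1 : ℝ) 2)
    (hu : 0 < u) (hc : 0 < c) :
    c / Real.pi *
      ∫ s in Set.Ioi (0 : ℝ), s ^ (-1 / α) *
        ∫ t in Set.Ioi (0 : ℝ),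
          Real.exp (-t ^ α) *
            Real.cos (t * s ^ (-1 / α) * (u + c * s) - t ^ α * Real.tan (Real.pi * α / 2)) =
    ∑' n : ℕ,
      (-(c * Real.cos (Real.pi * (α - 2) / 2))) ^ n * u ^ ((α - 1) * (n : ℝ)) /
        Real.Gamma (1 + (α - 1) * (n : ℝ)) := by
  rw [div_mul_eq_mul_div, mul_integral_rpow_mul_integral_exp_neg_rpow_mul_cos hα hu hc]
  exact (hasSum_im_mul_integral_mittagLefflerTransform (sub_pos.mpr hα.1) (by linarith [hα.2])
    (mul_pos hc (cos_mul_sub_two_div_two_pos hα)) (exp_pi_div_mul_I_re_neg hα)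
    (exp_pi_div_mul_I_im_pos hα) hu).tsum_eq.symm
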